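/- Under the stated family setting, the following two claims hold. (i) For every d ∈ 𝔇 there exists a unique function v_d : 𝕏_d → ℝ^A which is measurable with respect to 𝒳_d and the product σ-algebra on ℝ^A and satisfies for all (x,a) ∈ 𝕏_d × A that sup_{y∈𝕏_d} ‖v_d(y)‖_∞ / ω_d(y) < ∞, E[|f_d(X_d^{0,x,a}, v_d(X_d^{0,x,a}))|] < ∞, and v_d(x)(a) = E[f_d(X_d^{0,x,a}, v_d(X_d^{0,x,a}))]. (ii) There exist N : (0,1] → ℕ and c ∈ ℝ such that for all d ∈ 𝔇 and ε ∈ (0,1] it holds that 𝔠_{N_ε, d} ≤ c ℜ_d ε^{−c} and sup_{x∈𝕏_d} (E[‖v_d(x) − V_{N_ε, d}^0(x)‖_∞²] / ω_d(x)²)^{1/2} ≤ ε. -/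

import Mathlib

/-!
Write `s` for the common bound on `lam d * L d`, `|A|` for the number of actions, and `‖·‖_w` for the
supremum norm weighted by `1 / w d`.

**The fixed point.** The map `u ↦ E[f(X, u(X))]` is `s`-Lipschitz for `‖·‖_w`, so its Picard
iterates from `0` converge to a fixed point with `‖v‖_w ≤ κ / (1 - s)`, and bounded fixed points
are unique (`MLFP.Bounds.exists_fixedPoint`, `MLFP.Bounds.fixedPoint_unique`).

**The error recursion.** The field `V n θ` depends only on the randomness attached to strict
extensions of `θ` (`MLFP.Scheme.measV`), and by induction its law does not depend on `θ`
(`MLFP.Scheme.lawV`). Hence the means of the level-`l` samples telescope in `l`, and the bias of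
`V n` is the mean of `f(X, V (n-1) (X)) - f(X, v(X))`. Let `e n` bound the `L²` norm of
`max_a |v x a - V n θ x a|` divided by `w x`. The bias is at most `s * e (n-1)`. The level-`l`
samples are pairwise independent with `L²` norm at most `b 0 = κ` or `b l = s * (e l + e (l-1))`,
and bounding the maximum over `A` by the sum over `A` gives (`MLFP.Bounds.error_step`)
`e n ≤ s * e (n-1) + |A| * ∑_{l<n} b l / √(M ^ (n-l))`.

**Convergence.** With `q = 1 / √M`, a majorant `K * ρ ^ n` with `q < ρ < 1` closes this recursion
as soon as `s / ρ + |A| * s * (1 + 1/ρ) * q / (ρ - q) < 1` and `K` is large. At `ρ = 1` this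
inequality is exactly the assumption on `M`, so by continuity some `ρ < 1` satisfies it
(`MLFP.exists_rate`, `MLFP.exists_majorant`). The constants `K` and `ρ` do not depend on `d`.

**Cost.** The cost recursion gives `C n d ≤ R d * (4 * M) ^ n` (`MLFP.cost_bound`). Taking the least
`n` with `K * ρ ^ n ≤ ε` makes `(4 * M) ^ n` polynomial in `1 / ε` (`MLFP.exists_levels`).
-/

open MeasureTheory

namespace MLFP

open ProbabilityTheory

/-! ### Substituting an independent random point into a random field -/

section Substitution

variable {Ω S T Q : Type*} {G G₁ G₂ : MeasurableSpace Ω} {mS : MeasurableSpace S}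
  {mT : MeasurableSpace T} {mQ : MeasurableSpace Q}

lemma prod_mono (h : G₁ ≤ G₂) : mS.prod G₁ ≤ mS.prod G₂ :=
  sup_le_sup_left (MeasurableSpace.comap_mono h) _

lemma measurable_freeze (h₁ : G₁ ≤ G) (h₂ : G₂ ≤ G) {Y : Ω → S} (hY : Measurable[G₁] Y)
    {Z : S × Ω → T} (hZ : Measurable[mS.prod G₂] Z) : Measurable[G] fun ω => Z (Y ω, ω) := by
  have : @Measurable _ _ G (mS.prod G₂) (fun ω => (Y ω, ω)) :=
    @Measurable.prodMk Ω G S Ω mS G₂ _ _ (hY.mono h₁ le_rfl) (measurable_id.mono h₂ le_rfl)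
  exact hZ.comp this

lemma measurable_section {Z : S × Ω → T} (hZ : Measurable[mS.prod G] Z)
    (y : S) : Measurable[G] fun ω => Z (y, ω) := by
  have : @Measurable _ _ G (mS.prod G) (fun ω => (y, ω)) :=
    @Measurable.prodMk Ω G S Ω mS G _ _ measurable_const measurable_id
  exact hZ.comp this

/-- Composition of random fields: `Z` evaluated at the random point `Y q` is again a random
field. -/
lemma measurable_subst (h₁ : G₁ ≤ G) (h₂ : G₂ ≤ G) {Y : Q × Ω → S}
    (hY : Measurable[mQ.prod G₁] Y) {Z : S × Ω → T} (hZ : Measurable[mS.prod G₂] Z) :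
    Measurable[mQ.prod G] fun p => Z (Y p, p.2) := by
  have : @Measurable _ _ (mQ.prod G) (mS.prod G₂) (fun p => (Y p, p.2)) :=
    @Measurable.prodMk _ (mQ.prod G) S Ω mS G₂ _ _ (hY.mono (prod_mono h₁) le_rfl)
      ((@measurable_snd _ _ mQ G).mono le_rfl h₂)
  exact hZ.comp this

lemma measurable_of_apply {J : Type*} {g : Ω → J → S} (h : ∀ j, Measurable[G] fun ω => g ω j) :
    Measurable[G] g := @measurable_pi_iff _ _ _ G _ _ |>.2 h

lemma measurable_prod_pi {J : Type*} {Z : S × Ω → T} (hZ : Measurable[mS.prod G] Z) :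
    @Measurable ((J → S) × Ω) (J → T) (MeasurableSpace.pi.prod G) MeasurableSpace.pi
      fun p j => Z (p.1 j, p.2) :=
  measurable_of_apply fun j => hZ.comp (@Measurable.prodMk _ (MeasurableSpace.pi.prod G) S Ω mS G
    _ _ ((measurable_pi_apply j).comp (@measurable_fst _ _ MeasurableSpace.pi G))
    (@measurable_snd _ _ MeasurableSpace.pi G))

end Substitution

section General

variable {Ω S T : Type*} {G₁ G₂ G₁' G₂' : MeasurableSpace Ω} [mΩ : MeasurableSpace Ω]
  [mS : MeasurableSpace S] [mT : MeasurableSpace T] {μ : Measure Ω}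

/-- Translation between second moments as lower integrals and `L²` norms. -/
lemma eLpNorm_two_le_iff {g : Ω → ℝ} {c : ℝ} (hc : 0 ≤ c) :
    eLpNorm g 2 μ ≤ ENNReal.ofReal c ↔
      ∫⁻ ω, ENNReal.ofReal (g ω ^ 2) ∂μ ≤ ENNReal.ofReal (c ^ 2) := by
  have h : ∫⁻ ω, ENNReal.ofReal (g ω ^ 2) ∂μ = eLpNorm g 2 μ ^ 2 := by
    have := eLpNorm_nnreal_pow_eq_lintegral (μ := μ) (f := g) (p := 2) (by norm_num)
    simp only [NNReal.coe_ofNat, ENNReal.rpow_ofNat, ENNReal.coe_ofNat] at this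
    rw [this]
    refine lintegral_congr fun ω => ?_
    rw [← Real.enorm_abs, Real.enorm_of_nonneg (abs_nonneg _), ← ENNReal.ofReal_pow (abs_nonneg _),
      sq_abs]
  rw [h, ENNReal.ofReal_pow hc]
  exact (ENNReal.pow_le_pow_left_iff (by norm_num)).symm

lemma lintegral_prodMk_of_indepFun {Ω' : Type*} [MeasurableSpace Ω'] [IsProbabilityMeasure μ]
    {Y : Ω → S} {W : Ω → Ω'} (hY : Measurable Y) (hW : Measurable W) (hi : IndepFun Y W μ)
    {h : S × Ω' → ENNReal} (hh : Measurable h) :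
    ∫⁻ ω, h (Y ω, W ω) ∂μ = ∫⁻ y, ∫⁻ ω, h (y, W ω) ∂μ ∂(μ.map Y) := by
  have h1 := (indepFun_iff_map_prod_eq_prod_map_map hY.aemeasurable hW.aemeasurable).1 hi
  rw [← lintegral_map hh (hY.prodMk hW), h1]
  have := Measure.isProbabilityMeasure_map (μ := μ) hW.aemeasurable
  rw [lintegral_prod _ hh.aemeasurable]
  refine lintegral_congr fun y => ?_
  rw [lintegral_map (by fun_prop) hW]

/-- Disintegration: a random field that is measurable for a `σ`-algebra independent of the random
point `Y` can be integrated, at the point `Y`, by first freezing the point. -/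
lemma lintegral_freeze [IsProbabilityMeasure μ] (h₁ : G₁ ≤ mΩ)
    (h₂ : G₂ ≤ mΩ) (hi : Indep G₁ G₂ μ) {Y : Ω → S} (hY : Measurable[G₁] Y)
    {h : S × Ω → ENNReal} (hh : Measurable[mS.prod G₂] h) :
    ∫⁻ ω, h (Y ω, ω) ∂μ = ∫⁻ y, ∫⁻ ω, h (y, ω) ∂μ ∂(μ.map Y) := by
  refine @lintegral_prodMk_of_indepFun Ω S mΩ mS μ Ω G₂ _ Y id (hY.mono h₁ le_rfl)
    (measurable_id.mono h₂ le_rfl) ?_ h hh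
  refine (@IndepFun_iff_Indep _ _ _ mΩ mS G₂ _ _ _).2 ?_
  rw [MeasurableSpace.comap_id]
  exact indep_of_indep_of_le_left hi hY.comap_le

lemma map_freeze_apply [IsProbabilityMeasure μ] (h₁ : G₁ ≤ mΩ)
    (h₂ : G₂ ≤ mΩ) (hi : Indep G₁ G₂ μ) {Y : Ω → S} (hY : Measurable[G₁] Y)
    {Z : S × Ω → T} (hZ : Measurable[mS.prod G₂] Z) {B : Set T} (hB : MeasurableSet B) :
    μ.map (fun ω => Z (Y ω, ω)) B = ∫⁻ y, μ.map (fun ω => Z (y, ω)) B ∂(μ.map Y) := by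
  have hm : Measurable (fun ω => Z (Y ω, ω)) := measurable_freeze h₁ h₂ hY hZ
  have e (g : Ω → T) (hg : Measurable g) :
      μ.map g B = ∫⁻ ω, B.indicator (fun _ => (1 : ENNReal)) (g ω) ∂μ := by
    rw [← lintegral_map (measurable_const.indicator hB) hg, lintegral_indicator hB]; simp
  rw [e _ hm, lintegral_freeze h₁ h₂ hi hY
    (h := fun p => B.indicator (fun _ => (1 : ENNReal)) (Z p))
    ((measurable_const.indicator hB).comp hZ)]
  refine lintegral_congr fun y => ?_
  rw [e _ ((measurable_section hZ y).mono h₂ le_rfl)]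

/-- The law of a random field at an independent random point depends only on the law of the point
and on the laws of the field at deterministic points. -/
lemma map_freeze_congr [IsProbabilityMeasure μ] (h₁ : G₁ ≤ mΩ)
    (h₂ : G₂ ≤ mΩ) (hi : Indep G₁ G₂ μ) (h₁' : G₁' ≤ mΩ) (h₂' : G₂' ≤ mΩ) (hi' : Indep G₁' G₂' μ)
    {Y Y' : Ω → S} (hY : Measurable[G₁] Y) (hY' : Measurable[G₁'] Y')
    {Z Z' : S × Ω → T} (hZ : Measurable[mS.prod G₂] Z) (hZ' : Measurable[mS.prod G₂'] Z')
    (hYY : μ.map Y = μ.map Y')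
    (hZZ : ∀ y, μ.map (fun ω => Z (y, ω)) = μ.map (fun ω => Z' (y, ω))) :
    μ.map (fun ω => Z (Y ω, ω)) = μ.map (fun ω => Z' (Y' ω, ω)) := by
  ext B hB
  rw [map_freeze_apply h₁ h₂ hi hY hZ hB, map_freeze_apply h₁' h₂' hi' hY' hZ' hB, hYY]
  simp_rw [hZZ]

/-- The joint law of an independent pair is determined by the two marginal laws. -/
lemma map_pair_congr [IsProbabilityMeasure μ] (h₁ : G₁ ≤ mΩ)
    (h₂ : G₂ ≤ mΩ) (hi : Indep G₁ G₂ μ) (h₁' : G₁' ≤ mΩ) (h₂' : G₂' ≤ mΩ) (hi' : Indep G₁' G₂' μ)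
    {Y Y' : Ω → S} (hY : Measurable[G₁] Y) (hY' : Measurable[G₁'] Y')
    {Z Z' : Ω → T} (hZ : Measurable[G₂] Z) (hZ' : Measurable[G₂'] Z')
    (hYY : μ.map Y = μ.map Y') (hZZ : μ.map Z = μ.map Z') :
    μ.map (fun ω => (Y ω, Z ω)) = μ.map (fun ω => (Y' ω, Z' ω)) := by
  have a := (indepFun_iff_map_prod_eq_prod_map_map (hY.mono h₁ le_rfl).aemeasurable
    (hZ.mono h₂ le_rfl).aemeasurable).1 ((IndepFun_iff_Indep _ _ μ).2
      (indep_of_indep_of_le_left (indep_of_indep_of_le_right hi hZ.comap_le) hY.comap_le))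
  have b := (indepFun_iff_map_prod_eq_prod_map_map (hY'.mono h₁' le_rfl).aemeasurable
    (hZ'.mono h₂' le_rfl).aemeasurable).1 ((IndepFun_iff_Indep _ _ μ).2
      (indep_of_indep_of_le_left (indep_of_indep_of_le_right hi' hZ'.comap_le) hY'.comap_le))
  rw [a, b, hYY, hZZ]

/-- Monte Carlo averages of `N` pairwise independent variables with common mean `m` and `L²` norm
at most `B` are within `B / √N` of `m` in `L²`. -/
lemma eLpNorm_average_le [IsProbabilityMeasure μ] {N : ℕ} (hN : 0 < N) {Z : ℕ → Ω → ℝ}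
    {m B : ℝ} (hB : 0 ≤ B) (hZm : ∀ i ∈ Finset.range N, Measurable (Z i))
    (hZ : ∀ i ∈ Finset.range N, eLpNorm (Z i) 2 μ ≤ ENNReal.ofReal B)
    (hm : ∀ i ∈ Finset.range N, ∫ ω, Z i ω ∂μ = m)
    (hi : ∀ i ∈ Finset.range N, ∀ j ∈ Finset.range N, i ≠ j → IndepFun (Z i) (Z j) μ) :
    eLpNorm (fun ω => (N : ℝ)⁻¹ * ∑ i ∈ Finset.range N, Z i ω - m) 2 μ
      ≤ ENNReal.ofReal (B / √N) := by
  have hL : ∀ i ∈ Finset.range N, MemLp (Z i) 2 μ := fun i h =>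
    ⟨(hZm i h).aestronglyMeasurable, (hZ i h).trans_lt ENNReal.ofReal_lt_top⟩
  have hN' : (0 : ℝ) < N := by exact_mod_cast hN
  have hvar : Var[∑ i ∈ Finset.range N, Z i; μ] ≤ N * B ^ 2 := by
    rw [IndepFun.variance_sum hL (fun i h j h' hij => hi i h j h' hij)]
    have : ∀ i ∈ Finset.range N, Var[Z i; μ] ≤ B ^ 2 := by
      intro i h
      refine (variance_le_expectation_sq (hL i h).1).trans ?_
      have h1 := (eLpNorm_two_le_iff hB).1 (hZ i h)
      have h2 : ∫ ω, (Z i ^ 2) ω ∂μ = (∫⁻ ω, ENNReal.ofReal (Z i ω ^ 2) ∂μ).toReal :=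
        integral_eq_lintegral_of_nonneg_ae (Filter.Eventually.of_forall fun ω => sq_nonneg _)
          ((hZm i h).pow_const 2).aestronglyMeasurable
      rw [h2]
      exact ENNReal.toReal_le_of_le_ofReal (sq_nonneg _) h1
    refine (Finset.sum_le_sum this).trans ?_
    simp
  have hS : MemLp (∑ i ∈ Finset.range N, Z i) 2 μ := memLp_finsetSum' _ hL
  have hSI : ∫ ω, (∑ i ∈ Finset.range N, Z i) ω ∂μ = N * m := by
    simp only [Finset.sum_apply]
    rw [integral_finsetSum _ fun i h => (hL i h).integrable (by norm_num), Finset.sum_congr rfl hm]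
    simp
  rw [eLpNorm_two_le_iff (by positivity)]
  have e1 : ∀ ω, ((N : ℝ)⁻¹ * ∑ i ∈ Finset.range N, Z i ω - m) ^ 2
      = (N : ℝ)⁻¹ ^ 2 * ((∑ i ∈ Finset.range N, Z i) ω - N * m) ^ 2 := by
    intro ω
    simp only [Finset.sum_apply]
    field_simp
  rw [← ofReal_integral_eq_lintegral_ofReal _ (Filter.Eventually.of_forall fun ω => sq_nonneg _)]
  · refine ENNReal.ofReal_le_ofReal ?_
    simp_rw [e1]
    rw [integral_const_mul, ← hSI, ← variance_eq_integral hS.1.aemeasurable, div_pow,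
      Real.sq_sqrt hN'.le]
    calc (N : ℝ)⁻¹ ^ 2 * Var[∑ i ∈ Finset.range N, Z i; μ] ≤ (N : ℝ)⁻¹ ^ 2 * (N * B ^ 2) := by
          gcongr
      _ = B ^ 2 / N := by field_simp
  · simp_rw [e1]
    exact ((hS.sub (memLp_const (N * m))).integrable_sq).const_mul _

end General

/-! ### The index tree and the laws of the approximations -/

/-- The `σ`-algebra generated by the randomness attached to the indices in `U`. -/
abbrev sig {Ω : Type*} (F : List ℤ → MeasurableSpace Ω) (U : Set (List ℤ)) : MeasurableSpace Ω :=
  ⨆ η ∈ U, F η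

/-- The indices which strictly extend `θ`: the only ones that `V n θ` depends on. -/
def desc (θ : List ℤ) : Set (List ℤ) := {η | ∃ a t, η = θ ++ a :: t}

/-- The indices used by the `(l, i)`-th sample in the recursion for `V n θ`. -/
def branch (θ : List ℤ) (l i : ℕ) : Set (List ℤ) :=
  {η | ∃ t, η = θ ++ (l : ℤ) :: ((i : ℤ) + 1) :: t ∨ η = θ ++ (-(l : ℤ)) :: ((i : ℤ) + 1) :: t}

lemma sig_mono {Ω : Type*} (F : List ℤ → MeasurableSpace Ω) {U W : Set (List ℤ)} (h : U ⊆ W) :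
    sig F U ≤ sig F W := biSup_mono h

lemma le_sig {Ω : Type*} (F : List ℤ → MeasurableSpace Ω) {U : Set (List ℤ)} {η : List ℤ}
    (h : η ∈ U) : F η ≤ sig F U := le_biSup F h

lemma notMem_desc_of_length {α β : List ℤ} (h : α.length ≤ β.length) : α ∉ desc β := by
  rintro ⟨a, t, rfl⟩
  simp at h

lemma branch_subset_desc (θ : List ℤ) (l i : ℕ) : branch θ l i ⊆ desc θ := by
  rintro η ⟨t, rfl | rfl⟩ <;> exact ⟨_, _, rfl⟩

lemma mem_branch (θ : List ℤ) (l i : ℕ) : θ ++ [(l : ℤ), (i : ℤ) + 1] ∈ branch θ l i :=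
  ⟨[], Or.inl rfl⟩

lemma desc_pos_subset_branch (θ : List ℤ) (l i : ℕ) :
    desc (θ ++ [(l : ℤ), (i : ℤ) + 1]) ⊆ branch θ l i := by
  rintro η ⟨a, t, rfl⟩
  exact ⟨a :: t, Or.inl (by simp)⟩

lemma desc_neg_subset_branch (θ : List ℤ) (l i : ℕ) :
    desc (θ ++ [-(l : ℤ), (i : ℤ) + 1]) ⊆ branch θ l i := by
  rintro η ⟨a, t, rfl⟩
  exact ⟨a :: t, Or.inr (by simp)⟩

lemma branch_disjoint (θ : List ℤ) {l i l' i' : ℕ} (h : (l, i) ≠ (l', i')) :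
    Disjoint (branch θ l i) (branch θ l' i') := by
  rw [Set.disjoint_left]
  rintro η ⟨t, rfl | rfl⟩ ⟨t', h' | h'⟩ <;>
  · simp only [List.append_cancel_left_eq, List.cons.injEq] at h'
    exact h (Prod.ext (by simp; omega) (by simp; omega))

lemma desc_disjoint (θ : List ℤ) {l : ℕ} (hl : l ≠ 0) (i : ℕ) :
    Disjoint (desc (θ ++ [(l : ℤ), (i : ℤ) + 1])) (desc (θ ++ [-(l : ℤ), (i : ℤ) + 1])) := by
  rw [Set.disjoint_left]
  rintro η ⟨a, t, rfl⟩ ⟨a', t', h'⟩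
  simp only [List.append_assoc, List.append_cancel_left_eq, List.cons_append, List.nil_append,
    List.cons.injEq] at h'
  omega

-- `A` needs a named universe because `Scheme.lawV` quantifies over index types in it.
universe u

section Field

variable {Ω 𝕏 : Type*} {A : Type u} [mΩ : MeasurableSpace Ω] [m𝕏 : MeasurableSpace 𝕏]

/-- The structural part of the setting, for one fixed problem: independent `σ`-algebras `F θ`,
identically distributed random fields `X θ` measurable with respect to them, a measurable
nonlinearity `f` and approximations `V` which satisfy the multilevel recursion. -/
structure Scheme (μ : Measure Ω) (F : List ℤ → MeasurableSpace Ω)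
    (X : List ℤ → 𝕏 → A → Ω → 𝕏) (f : 𝕏 → (A → ℝ) → ℝ) (M : ℕ)
    (V : ℕ → List ℤ → 𝕏 → A → Ω → ℝ) : Prop where
  sub : ∀ θ, F θ ≤ mΩ
  indep : iIndep F μ
  measX : ∀ θ, Measurable[m𝕏.prod (F θ)] fun p : 𝕏 × Ω => fun a => X θ p.1 a p.2
  lawX : ∀ θ η, μ.map (fun ω => fun p : 𝕏 × A => X θ p.1 p.2 ω)
    = μ.map (fun ω => fun p : 𝕏 × A => X η p.1 p.2 ω)
  measf : Measurable fun p : 𝕏 × (A → ℝ) => f p.1 p.2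
  recV : ∀ (n : ℕ) (θ : List ℤ) (x : 𝕏) (a : A) (ω : Ω),
    V n θ x a ω = ∑ l ∈ Finset.range n, ((M : ℝ) ^ (n - l))⁻¹ *
      ∑ i ∈ Finset.range (M ^ (n - l)),
        (f (X (θ ++ [(l : ℤ), (i : ℤ) + 1]) x a ω)
            (fun b => V l (θ ++ [(l : ℤ), (i : ℤ) + 1])
              (X (θ ++ [(l : ℤ), (i : ℤ) + 1]) x a ω) b ω)
          - if l = 0 then 0 else
            f (X (θ ++ [(l : ℤ), (i : ℤ) + 1]) x a ω)
              (fun b => V (l - 1) (θ ++ [-(l : ℤ), (i : ℤ) + 1])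
                (X (θ ++ [(l : ℤ), (i : ℤ) + 1]) x a ω) b ω))

/-- The level-`l` increment `f(y, V_l^α(y)) - 1_{l ≥ 1} f(y, V_{l-1}^α'(y))` at a fixed point. -/
def incr (f : 𝕏 → (A → ℝ) → ℝ) (V : ℕ → List ℤ → 𝕏 → A → Ω → ℝ) (l : ℕ) (α α' : List ℤ)
    (y : 𝕏) (ω : Ω) : ℝ :=
  f y (fun b => V l α y b ω) - if l = 0 then 0 else f y (fun b => V (l - 1) α' y b ω)

variable {μ : Measure Ω} {F : List ℤ → MeasurableSpace Ω}
  {X : List ℤ → 𝕏 → A → Ω → 𝕏} {f : 𝕏 → (A → ℝ) → ℝ} {M : ℕ}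
  {V : ℕ → List ℤ → 𝕏 → A → Ω → ℝ}

lemma measurable_f_comp {Q : Type*} {mQ : MeasurableSpace Q}
    (hf : Measurable fun p : 𝕏 × (A → ℝ) => f p.1 p.2) {y : Q → 𝕏} {r : A → Q → ℝ}
    (hy : Measurable y) (hr : ∀ b, Measurable (r b)) :
    Measurable fun q => f (y q) (fun b => r b q) :=
  hf.comp (hy.prodMk (measurable_pi_iff.2 hr))

namespace Scheme

variable (S : Scheme μ F X f M V)
include S

lemma sig_le (U : Set (List ℤ)) : sig F U ≤ mΩ := iSup₂_le fun θ _ => S.sub θ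

lemma indep_sig {U W : Set (List ℤ)} (h : Disjoint U W) : Indep (sig F U) (sig F W) μ :=
  indep_iSup_of_disjoint S.sub S.indep h

lemma indep_F_sig {α : List ℤ} {W : Set (List ℤ)} (h : α ∉ W) : Indep (F α) (sig F W) μ :=
  indep_of_indep_of_le_left (S.indep_sig (U := {α}) (Set.disjoint_singleton_left.2 h))
    (le_sig F rfl)

lemma measX' (θ : List ℤ) (a : A) : Measurable[m𝕏.prod (F θ)] fun p : 𝕏 × Ω => X θ p.1 a p.2 :=
  (measurable_pi_apply a).comp (S.measX θ)

lemma measX_pt (θ : List ℤ) (x : 𝕏) (a : A) : Measurable[F θ] (X θ x a) :=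
  measurable_section (S.measX' θ a) x

lemma V_zero (θ : List ℤ) (x : 𝕏) (a : A) (ω : Ω) : V 0 θ x a ω = 0 := by
  rw [S.recV]; simp

lemma V_eq (n : ℕ) (θ : List ℤ) (x : 𝕏) (a : A) (ω : Ω) :
    V n θ x a ω = ∑ l ∈ Finset.range n, ((M : ℝ) ^ (n - l))⁻¹ *
      ∑ i ∈ Finset.range (M ^ (n - l)),
        incr f V l (θ ++ [(l : ℤ), (i : ℤ) + 1]) (θ ++ [-(l : ℤ), (i : ℤ) + 1])
          (X (θ ++ [(l : ℤ), (i : ℤ) + 1]) x a ω) ω := S.recV n θ x a ω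

lemma measurable_incr_of {l : ℕ} {α α' : List ℤ} {U : Set (List ℤ)}
    (h1 : ∀ b, Measurable[m𝕏.prod (sig F U)] fun p : 𝕏 × Ω => V l α p.1 b p.2)
    (h2 : l ≠ 0 → ∀ b, Measurable[m𝕏.prod (sig F U)] fun p : 𝕏 × Ω => V (l - 1) α' p.1 b p.2) :
    Measurable[m𝕏.prod (sig F U)] fun p : 𝕏 × Ω => incr f V l α α' p.1 p.2 := by
  unfold incr
  refine Measurable.sub (measurable_f_comp S.measf measurable_fst h1) ?_
  split_ifs with hl
  · exact measurable_const
  · exact measurable_f_comp S.measf measurable_fst (h2 hl)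

/-- `V n θ` is a jointly measurable function of the point and of the randomness attached to
indices strictly extending `θ`. -/
lemma measV (n : ℕ) : ∀ (θ : List ℤ) (a : A),
    Measurable[m𝕏.prod (sig F (desc θ))] fun p : 𝕏 × Ω => V n θ p.1 a p.2 := by
  induction n using Nat.strong_induction_on with
  | _ n ih =>
    intro θ a
    simp_rw [S.V_eq]
    refine Finset.measurable_sum _ fun l hl => Measurable.const_mul
      (Finset.measurable_sum _ fun i hi => ?_) _
    have hl := Finset.mem_range.1 hl
    have hb := sig_mono F (branch_subset_desc θ l i)
    refine measurable_subst (mS := m𝕏) (G₁ := sig F (branch θ l i)) (G₂ := sig F (branch θ l i))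
      hb hb (Z := fun q => incr f V l (θ ++ [(l : ℤ), (i : ℤ) + 1])
        (θ ++ [-(l : ℤ), (i : ℤ) + 1]) q.1 q.2)
      ((S.measX' _ a).mono (prod_mono (le_sig F (mem_branch θ l i))) le_rfl) ?_
    refine S.measurable_incr_of (fun b => ?_) fun _ b => ?_
    · exact (ih l hl _ b).mono (prod_mono (sig_mono F (desc_pos_subset_branch θ l i))) le_rfl
    · exact (ih (l - 1) (by omega) _ b).mono
        (prod_mono (sig_mono F (desc_neg_subset_branch θ l i))) le_rfl

lemma measV_pt (n : ℕ) (θ : List ℤ) (x : 𝕏) (a : A) : Measurable[sig F (desc θ)] (V n θ x a) :=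
  measurable_section (S.measV n θ a) x

lemma measurable_incr (l : ℕ) {α α' : List ℤ} {U : Set (List ℤ)} (h1 : desc α ⊆ U)
    (h2 : desc α' ⊆ U) :
    Measurable[m𝕏.prod (sig F U)] fun p : 𝕏 × Ω => incr f V l α α' p.1 p.2 :=
  S.measurable_incr_of (fun b => (S.measV l α b).mono (prod_mono (sig_mono F h1)) le_rfl)
    fun _ b => (S.measV (l - 1) α' b).mono (prod_mono (sig_mono F h2)) le_rfl

/-- The `(l, i)`-th sample of `V n θ` only uses the randomness in `branch θ l i`; these sets are
disjoint, which makes the samples independent. -/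
lemma measurable_sample (θ : List ℤ) (l i : ℕ) (x : 𝕏) (a : A) :
    Measurable[sig F (branch θ l i)] fun ω =>
      incr f V l (θ ++ [(l : ℤ), (i : ℤ) + 1]) (θ ++ [-(l : ℤ), (i : ℤ) + 1])
          (X (θ ++ [(l : ℤ), (i : ℤ) + 1]) x a ω) ω :=
  measurable_freeze le_rfl le_rfl
    ((S.measX_pt _ x a).mono (le_sig F (mem_branch θ l i)) le_rfl)
    (S.measurable_incr l (desc_pos_subset_branch θ l i) (desc_neg_subset_branch θ l i))

/-- Sums of independent vectors have the same law when the summands do. -/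
lemma law_sum [IsProbabilityMeasure μ] {K J : Type*} {U U' : K → Set (List ℤ)}
    (hU : ∀ k k', k ≠ k' → Disjoint (U k) (U k')) (hU' : ∀ k k', k ≠ k' → Disjoint (U' k) (U' k'))
    {Y Y' : K → Ω → J → ℝ} (hY : ∀ k, Measurable[sig F (U k)] (Y k))
    (hY' : ∀ k, Measurable[sig F (U' k)] (Y' k)) (h : ∀ k, μ.map (Y k) = μ.map (Y' k))
    (I : Finset K) :
    μ.map (fun ω => ∑ k ∈ I, Y k ω) = μ.map (fun ω => ∑ k ∈ I, Y' k ω) := by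
  classical
  have key {U : K → Set (List ℤ)} {Y : K → Ω → J → ℝ} (hY : ∀ k, Measurable[sig F (U k)] (Y k))
      (I : Finset K) : Measurable[sig F (⋃ k ∈ I, U k)] (fun ω => ∑ k ∈ I, Y k ω) := by
    refine measurable_of_apply fun j => ?_
    simp only [Finset.sum_apply]
    refine Finset.measurable_sum _ fun k hk => ?_
    exact ((measurable_pi_apply j).comp (hY k)).mono
      (sig_mono F (Set.subset_biUnion_of_mem (u := U) hk)) le_rfl
  induction I using Finset.induction_on with
  | empty => simp
  | insert k I hk ih =>
    simp only [Finset.sum_insert hk]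
    have hd {U : K → Set (List ℤ)} (hU : ∀ k k', k ≠ k' → Disjoint (U k) (U k')) :
        Disjoint (U k) (⋃ k' ∈ I, U k') := by
      simp only [Set.disjoint_iUnion_right]
      exact fun k' hk' => hU k k' (fun e => hk (e ▸ hk'))
    have hp := map_pair_congr (S.sig_le _) (S.sig_le _) (S.indep_sig (hd hU)) (S.sig_le _)
      (S.sig_le _) (S.indep_sig (hd hU')) (hY k) (hY' k) (key hY I) (key hY' I) (h k) ih
    have hadd : Measurable fun p : (J → ℝ) × (J → ℝ) => p.1 + p.2 := by
      refine measurable_pi_iff.2 fun j => ?_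
      simp only [Pi.add_apply]
      fun_prop
    have e {Y : K → Ω → J → ℝ} {U : K → Set (List ℤ)} (hY : ∀ k, Measurable[sig F (U k)] (Y k)) :
        μ.map (fun ω => Y k ω + ∑ k' ∈ I, Y k' ω)
          = (μ.map (fun ω => (Y k ω, ∑ k' ∈ I, Y k' ω))).map (fun p => p.1 + p.2) := by
      rw [Measure.map_map hadd (((hY k).mono (S.sig_le _) le_rfl).prodMk
        ((key hY I).mono (S.sig_le _) le_rfl))]
      rfl
    rw [e hY, e hY', hp]

/-- If the laws of the fields at levels `l` and `l - 1` do not depend on the index, then neither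
does the law of the level-`l` increment. -/
lemma law_incr [IsProbabilityMeasure μ] {l : ℕ}
    (hl : ∀ (θ η : List ℤ) (ι : Type u) (x : ι → 𝕏),
      μ.map (fun ω => fun j : ι × A => V l θ (x j.1) j.2 ω)
        = μ.map (fun ω => fun j : ι × A => V l η (x j.1) j.2 ω))
    (hl' : ∀ (θ η : List ℤ) (ι : Type u) (x : ι → 𝕏),
      μ.map (fun ω => fun j : ι × A => V (l - 1) θ (x j.1) j.2 ω)
        = μ.map (fun ω => fun j : ι × A => V (l - 1) η (x j.1) j.2 ω))
    {α α' β β' : List ℤ} (hα : l ≠ 0 → Disjoint (desc α) (desc α'))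
    (hβ : l ≠ 0 → Disjoint (desc β) (desc β')) (ι : Type u) (y : ι → 𝕏) :
    μ.map (fun ω => fun j => incr f V l α α' (y j) ω)
      = μ.map (fun ω => fun j => incr f V l β β' (y j) ω) := by
  rcases eq_or_ne l 0 with rfl | h0
  · simp [incr, S.V_zero]
  · have mv (n : ℕ) (θ : List ℤ) : Measurable[sig F (desc θ)]
        (fun ω => fun j : ι × A => V n θ (y j.1) j.2 ω) :=
      measurable_of_apply fun j => S.measV_pt n θ (y j.1) j.2
    have hp := map_pair_congr (S.sig_le _) (S.sig_le _) (S.indep_sig (hα h0)) (S.sig_le _)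
      (S.sig_le _) (S.indep_sig (hβ h0)) (mv l α) (mv l β) (mv (l - 1) α') (mv (l - 1) β')
      (hl α β ι y) (hl' α' β' ι y)
    let Φ : (ι × A → ℝ) × (ι × A → ℝ) → ι → ℝ := fun p j =>
      f (y j) (fun b => p.1 (j, b)) - f (y j) (fun b => p.2 (j, b))
    have hΦ : Measurable Φ := by
      refine measurable_pi_iff.2 fun j => ?_
      exact (measurable_f_comp S.measf measurable_const (fun b => by fun_prop)).sub
        (measurable_f_comp S.measf measurable_const (fun b => by fun_prop))
    have e (α α' : List ℤ) : μ.map (fun ω => fun j => incr f V l α α' (y j) ω)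
        = (μ.map (fun ω => ((fun j : ι × A => V l α (y j.1) j.2 ω),
            (fun j : ι × A => V (l - 1) α' (y j.1) j.2 ω)))).map Φ := by
      rw [Measure.map_map hΦ (((mv l α).mono (S.sig_le _) le_rfl).prodMk
        ((mv (l - 1) α').mono (S.sig_le _) le_rfl))]
      congr 1
      ext ω j
      simp [incr, h0, Φ]
    rw [e, e, hp]

lemma measurable_fieldX (θ : List ℤ) : Measurable (fun ω => fun p : 𝕏 × A => X θ p.1 p.2 ω) :=
  measurable_pi_iff.2 fun p => (S.measX_pt θ p.1 p.2).mono (S.sub θ) le_rfl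

lemma law_X (θ η : List ℤ) {ι : Type*} (x : ι → 𝕏) (a : ι → A) :
    μ.map (fun ω => fun j => X θ (x j) (a j) ω) = μ.map (fun ω => fun j => X η (x j) (a j) ω) := by
  have hm : Measurable (fun (g : 𝕏 × A → 𝕏) (j : ι) => g (x j, a j)) :=
    measurable_pi_iff.2 fun j => measurable_pi_apply _
  have e (θ : List ℤ) : μ.map (fun ω => fun j => X θ (x j) (a j) ω)
      = (μ.map (fun ω => fun p : 𝕏 × A => X θ p.1 p.2 ω)).map (fun g j => g (x j, a j)) := by
    rw [Measure.map_map hm (S.measurable_fieldX θ)]; rfl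
  rw [e, e, S.lawX θ η]

lemma law_X_pt (θ η : List ℤ) (x : 𝕏) (a : A) : μ.map (X θ x a) = μ.map (X η x a) := by
  have hm : Measurable (fun (g : 𝕏 × A → 𝕏) => g (x, a)) := measurable_pi_apply _
  have e (θ : List ℤ) : μ.map (X θ x a)
      = (μ.map (fun ω => fun p : 𝕏 × A => X θ p.1 p.2 ω)).map (fun g => g (x, a)) := by
    rw [Measure.map_map hm (S.measurable_fieldX θ)]; rfl
  rw [e, e, S.lawX θ η]

/-- The finite-dimensional (indeed all joint) laws of the random field `V n θ` do not depend
on `θ`. The index type `ι` has to vary because the induction step evaluates the lower levels at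
the points `X` indexed by `ι × A`. -/
lemma lawV [IsProbabilityMeasure μ] (n : ℕ) : ∀ (θ η : List ℤ) (ι : Type u) (x : ι → 𝕏),
    μ.map (fun ω => fun j : ι × A => V n θ (x j.1) j.2 ω)
      = μ.map (fun ω => fun j : ι × A => V n η (x j.1) j.2 ω) := by
  induction n using Nat.strong_induction_on with
  | _ n ih =>
    intro θ η ι x
    -- sum over levels and samples at once; the summands live on disjoint branches
    let I : Finset ((_ : Fin n) × ℕ) := Finset.univ.sigma fun l => Finset.range (M ^ (n - l))
    let Y (θ : List ℤ) (k : (_ : Fin n) × ℕ) (ω : Ω) (j : ι × A) : ℝ :=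
      ((M : ℝ) ^ (n - k.1))⁻¹ *
        incr f V k.1 (θ ++ [((k.1 : ℕ) : ℤ), (k.2 : ℤ) + 1]) (θ ++ [-((k.1 : ℕ) : ℤ), (k.2 : ℤ) + 1])
          (X (θ ++ [((k.1 : ℕ) : ℤ), (k.2 : ℤ) + 1]) (x j.1) j.2 ω) ω
    have hV (θ : List ℤ) : (fun ω => fun j : ι × A => V n θ (x j.1) j.2 ω)
        = fun ω => ∑ k ∈ I, Y θ k ω := by
      ext ω j
      rw [S.V_eq, Finset.sum_apply, Finset.sum_sigma, Finset.sum_range]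
      simp only [Finset.mul_sum, Y]
    have hd (θ : List ℤ) (k k' : (_ : Fin n) × ℕ) (h : k ≠ k') :
        Disjoint (branch θ k.1 k.2) (branch θ k'.1 k'.2) := by
      refine branch_disjoint θ fun e => h ?_
      obtain ⟨k1, k2⟩ := k
      obtain ⟨k1', k2'⟩ := k'
      simp only [Prod.mk.injEq] at e
      obtain ⟨e1, rfl⟩ := e
      obtain rfl := Fin.ext e1
      rfl
    rw [hV, hV]
    have hYm (θ : List ℤ) (k : (_ : Fin n) × ℕ) : Measurable[sig F (branch θ k.1 k.2)] (Y θ k) :=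
      measurable_of_apply fun j => Measurable.const_mul
        (S.measurable_sample θ k.1 k.2 (x j.1) j.2) ((M : ℝ) ^ (n - k.1))⁻¹
    refine S.law_sum (hd θ) (hd η) (hYm θ) (hYm η) (fun k => ?_) I
    obtain ⟨⟨l, hl⟩, i⟩ := k
    have hZ (θ : List ℤ) := measurable_prod_pi (J := ι × A) (S.measurable_incr l
      (α := θ ++ [(l : ℤ), (i : ℤ) + 1]) (α' := θ ++ [-(l : ℤ), (i : ℤ) + 1])
      Set.subset_union_left Set.subset_union_right)
    have hnot (θ : List ℤ) : θ ++ [(l : ℤ), (i : ℤ) + 1] ∉ desc (θ ++ [(l : ℤ), (i : ℤ) + 1]) ∪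
          desc (θ ++ [-(l : ℤ), (i : ℤ) + 1]) := by
      rintro (h | h)
      · exact notMem_desc_of_length le_rfl h
      · exact notMem_desc_of_length (by simp) h
    have hY (θ : List ℤ) : Measurable[F (θ ++ [(l : ℤ), (i : ℤ) + 1])] (fun ω => fun j : ι × A =>
        X (θ ++ [(l : ℤ), (i : ℤ) + 1]) (x j.1) j.2 ω) :=
      measurable_of_apply fun j => S.measX_pt _ (x j.1) j.2
    have hXX := S.law_X (θ ++ [(l : ℤ), (i : ℤ) + 1]) (η ++ [(l : ℤ), (i : ℤ) + 1])
      (fun j : ι × A => x j.1) (fun j => j.2)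
    have hinc (y : ι × A → 𝕏) := S.law_incr (ih l hl) (ih (l - 1) (by omega))
        (fun h0 => desc_disjoint θ h0 i) (fun h0 => desc_disjoint η h0 i) (ι × A) y
    -- the increments are evaluated at points that are independent of them
    have hlaw := map_freeze_congr (S.sub _) (S.sig_le _) (S.indep_F_sig (hnot θ)) (S.sub _)
      (S.sig_le _) (S.indep_F_sig (hnot η)) (hY θ) (hY η) (hZ θ) (hZ η) hXX hinc
    have hc : Measurable fun (g : ι × A → ℝ) j => ((M : ℝ) ^ (n - l))⁻¹ * g j :=
      measurable_pi_iff.2 fun j => (measurable_pi_apply j).const_mul _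
    have e (θ : List ℤ) : μ.map (Y θ ⟨⟨l, hl⟩, i⟩) = (μ.map (fun ω => fun j : ι × A =>
        incr f V l (θ ++ [(l : ℤ), (i : ℤ) + 1]) (θ ++ [-(l : ℤ), (i : ℤ) + 1])
          (X (θ ++ [(l : ℤ), (i : ℤ) + 1]) (x j.1) j.2 ω) ω)).map
          (fun g j => ((M : ℝ) ^ (n - l))⁻¹ * g j) := by
      rw [Measure.map_map hc (measurable_pi_iff.2 fun j =>
        (S.measurable_sample θ l i _ _).mono (S.sig_le _) le_rfl)]
      rfl
    rw [e, e]
    exact congrArg _ hlaw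

lemma lawV_pt [IsProbabilityMeasure μ] (n : ℕ) (θ η : List ℤ) (y : 𝕏) :
    μ.map (fun ω => fun b => V n θ y b ω) = μ.map (fun ω => fun b => V n η y b ω) := by
  have hm : Measurable (fun (g : PUnit.{u + 1} × A → ℝ) (b : A) => g (⟨⟩, b)) :=
    measurable_pi_iff.2 fun b => measurable_pi_apply _
  have e (θ : List ℤ) : μ.map (fun ω => fun b => V n θ y b ω)
      = (μ.map (fun ω => fun j : PUnit.{u + 1} × A => V n θ y j.2 ω)).map
        (fun g b => g (⟨⟩, b)) := by
    rw [Measure.map_map hm (measurable_pi_iff.2 fun j =>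
      (S.measV_pt n θ y j.2).mono (S.sig_le _) le_rfl)]
    rfl
  rw [e, e, S.lawV n θ η PUnit (fun _ => y)]

end Scheme

end Field

/-! ### The fixed point: existence and uniqueness -/

section Error

variable {Ω 𝕏 : Type*} {A : Type u} [mΩ : MeasurableSpace Ω] [m𝕏 : MeasurableSpace 𝕏]

/-- The quantitative part of the setting, for one fixed problem: a positive measurable weight `w`,
the Lipschitz bound on `f`, the second moment bounds at the reference index `[0]`, and the
contraction constant `s < 1` which dominates `lam * L`. -/
structure Bounds (μ : Measure Ω) (X : List ℤ → 𝕏 → A → Ω → 𝕏) (f : 𝕏 → (A → ℝ) → ℝ)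
    (w : 𝕏 → ℝ) (κ lam L s : ℝ) : Prop where
  hκ : 0 ≤ κ
  hlam : 0 ≤ lam
  hL : 0 ≤ L
  w_pos : ∀ x, 0 < w x
  measw : Measurable w
  lip : ∀ (x : 𝕏) (r s : A → ℝ), |f x r - f x s| ≤ L * ⨆ b : A, |r b - s b|
  momf : ∀ (x : 𝕏) (a : A), ∫⁻ ω, ENNReal.ofReal (|f (X [0] x a ω) 0| ^ 2) ∂μ
    ≤ ENNReal.ofReal ((κ * w x) ^ 2)
  momw : ∀ (x : 𝕏) (a : A), ∫⁻ ω, ENNReal.ofReal (w (X [0] x a ω) ^ 2) ∂μ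
    ≤ ENNReal.ofReal ((lam * w x) ^ 2)
  hs : lam * L ≤ s
  hs1 : s < 1

lemma abs_le_iSup [Fintype A] (u : A → ℝ) (a : A) : |u a| ≤ ⨆ b, |u b| :=
  le_ciSup (f := fun b => |u b|) (Set.finite_range _).bddAbove a

section L2

variable {μ : Measure Ω}

lemma eLpNorm_le_of_abs_le {g h : Ω → ℝ} {k c : ℝ} (hk : 0 ≤ k)
    (hg : eLpNorm g 2 μ ≤ ENNReal.ofReal c) (hh : ∀ ω, |h ω| ≤ k * g ω) :
    eLpNorm h 2 μ ≤ ENNReal.ofReal (k * c) := by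
  refine (eLpNorm_mono_real (g := k • g) hh).trans ?_
  rw [eLpNorm_const_smul, ENNReal.ofReal_mul hk, Real.enorm_of_nonneg hk]
  gcongr

lemma abs_integral_le [IsProbabilityMeasure μ] {g : Ω → ℝ} {c : ℝ} (hc : 0 ≤ c)
    (hgm : Measurable g) (hg : eLpNorm g 2 μ ≤ ENNReal.ofReal c) : |∫ ω, g ω ∂μ| ≤ c := by
  have h1 : eLpNorm g 1 μ ≤ ENNReal.ofReal c :=
    (eLpNorm_le_eLpNorm_of_exponent_le (by norm_num) hgm.aestronglyMeasurable).trans hg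
  rw [eLpNorm_one_eq_lintegral_enorm] at h1
  have h2 := (enorm_integral_le_lintegral_enorm g).trans h1
  rw [← Real.enorm_abs, Real.enorm_of_nonneg (abs_nonneg _)] at h2
  exact (ENNReal.ofReal_le_ofReal_iff hc).1 h2

lemma integrable_of_eLpNorm_two_le [IsProbabilityMeasure μ] {g : Ω → ℝ} {c : ℝ}
    (hgm : Measurable g) (hg : eLpNorm g 2 μ ≤ ENNReal.ofReal c) : Integrable g μ :=
  MemLp.integrable (q := 2) (by norm_num)
    ⟨hgm.aestronglyMeasurable, hg.trans_lt ENNReal.ofReal_lt_top⟩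

lemma eLpNorm_sum_abs_le {K : Type*} (I : Finset K) {g : K → Ω → ℝ} {c : K → ℝ}
    (hc : ∀ k ∈ I, 0 ≤ c k) (hgm : ∀ k ∈ I, Measurable (g k))
    (hg : ∀ k ∈ I, eLpNorm (g k) 2 μ ≤ ENNReal.ofReal (c k)) :
    eLpNorm (fun ω => ∑ k ∈ I, |g k ω|) 2 μ ≤ ENNReal.ofReal (∑ k ∈ I, c k) := by
  have e : (fun ω => ∑ k ∈ I, |g k ω|) = ∑ k ∈ I, fun ω => |g k ω| := by
    ext ω; simp
  rw [e, ENNReal.ofReal_sum_of_nonneg hc]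
  refine (eLpNorm_sum_le (fun k hk => (hgm k hk).norm.aestronglyMeasurable) (by norm_num)).trans
    (Finset.sum_le_sum fun k hk => ?_)
  exact (eLpNorm_norm (g k)).le.trans (hg k hk)

lemma eLpNorm_add_abs_le {g h : Ω → ℝ} {c k : ℝ} (hc : 0 ≤ c) (hk : 0 ≤ k)
    (hgm : Measurable g) (hhm : Measurable h)
    (hg : eLpNorm g 2 μ ≤ ENNReal.ofReal c) (hh : eLpNorm h 2 μ ≤ ENNReal.ofReal k) :
    eLpNorm (fun ω => |g ω| + |h ω|) 2 μ ≤ ENNReal.ofReal (c + k) := by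
  rw [ENNReal.ofReal_add hc hk]
  refine (eLpNorm_add_le (f := fun ω => |g ω|) (g := fun ω => |h ω|)
    hgm.norm.aestronglyMeasurable hhm.norm.aestronglyMeasurable (by norm_num)).trans ?_
  exact add_le_add ((eLpNorm_norm g).le.trans hg) ((eLpNorm_norm h).le.trans hh)

end L2

variable {μ : Measure Ω} {F : List ℤ → MeasurableSpace Ω}
  {X : List ℤ → 𝕏 → A → Ω → 𝕏} {f : 𝕏 → (A → ℝ) → ℝ} {M : ℕ}
  {V : ℕ → List ℤ → 𝕏 → A → Ω → ℝ} {w : 𝕏 → ℝ} {κ lam L s : ℝ}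

namespace Bounds

section Scheme

variable (S : Scheme μ F X f M V)
include S

lemma measX_amb (θ : List ℤ) (x : 𝕏) (a : A) : Measurable (X θ x a) :=
  (S.measX_pt θ x a).mono (S.sub θ) le_rfl

lemma measurable_fu {u : 𝕏 → A → ℝ} (hu : Measurable u) (θ : List ℤ) (x : 𝕏) (a : A) :
    Measurable fun ω => f (X θ x a ω) (u (X θ x a ω)) :=
  S.measf.comp ((measX_amb S θ x a).prodMk (hu.comp (measX_amb S θ x a)))

lemma measurable_picard [SFinite μ] {u : 𝕏 → A → ℝ} (hu : Measurable u) :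
    Measurable fun (x : 𝕏) (a : A) => ∫ ω, f (X [0] x a ω) (u (X [0] x a ω)) ∂μ := by
  refine measurable_pi_iff.2 fun a => ?_
  have hX : Measurable fun p : 𝕏 × Ω => X [0] p.1 a p.2 :=
    (S.measX' [0] a).mono (prod_mono (S.sub _)) le_rfl
  have : Measurable fun p : 𝕏 × Ω => f (X [0] p.1 a p.2) (u (X [0] p.1 a p.2)) :=
    S.measf.comp (hX.prodMk (hu.comp hX))
  exact (StronglyMeasurable.integral_prod_right
    (f := fun x ω => f (X [0] x a ω) (u (X [0] x a ω))) this.stronglyMeasurable).measurable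

end Scheme

variable (S : Scheme μ F X f M V) (B : Bounds μ X f w κ lam L s)

include B in
lemma s_nonneg : 0 ≤ s := (mul_nonneg B.hlam B.hL).trans B.hs

include S B

lemma eLpNorm_w (θ : List ℤ) (x : 𝕏) (a : A) :
    eLpNorm (fun ω => w (X θ x a ω)) 2 μ ≤ ENNReal.ofReal (lam * w x) := by
  rw [eLpNorm_two_le_iff (mul_nonneg B.hlam (B.w_pos x).le)]
  have hm : Measurable fun y => ENNReal.ofReal (w y ^ 2) := (B.measw.pow_const 2).ennreal_ofReal
  rw [← lintegral_map hm (measX_amb S θ x a), S.law_X_pt θ [0],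
    lintegral_map hm (measX_amb S _ x a)]
  exact B.momw x a

lemma eLpNorm_f0 (θ : List ℤ) (x : 𝕏) (a : A) :
    eLpNorm (fun ω => f (X θ x a ω) 0) 2 μ ≤ ENNReal.ofReal (κ * w x) := by
  rw [eLpNorm_two_le_iff (mul_nonneg B.hκ (B.w_pos x).le)]
  have hm : Measurable fun y => ENNReal.ofReal (f y 0 ^ 2) :=
    ((measurable_f_comp S.measf measurable_id
      (fun _ => measurable_const)).pow_const 2).ennreal_ofReal
  rw [← lintegral_map hm (measX_amb S θ x a), S.law_X_pt θ [0],
    lintegral_map hm (measX_amb S _ x a)]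
  simpa using B.momf x a

variable [Nonempty A]

lemma eLpNorm_lip {u u' : 𝕏 → A → ℝ} {K : ℝ} (hK : 0 ≤ K)
    (h : ∀ y b, |u y b - u' y b| ≤ K * w y) (θ : List ℤ) (x : 𝕏) (a : A) :
    eLpNorm (fun ω => f (X θ x a ω) (u (X θ x a ω)) - f (X θ x a ω) (u' (X θ x a ω))) 2 μ
      ≤ ENNReal.ofReal (s * K * w x) := by
  refine (eLpNorm_le_of_abs_le (mul_nonneg B.hL hK) (eLpNorm_w S B θ x a) fun ω => ?_).trans
    (ENNReal.ofReal_le_ofReal ?_)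
  · refine (B.lip _ _ _).trans ?_
    rw [mul_assoc]
    exact mul_le_mul_of_nonneg_left (ciSup_le fun b => h _ b) B.hL
  · have := B.hs
    have := B.w_pos x
    calc L * K * (lam * w x) = (lam * L) * (K * w x) := by ring
      _ ≤ s * (K * w x) := by gcongr
      _ = _ := by ring

variable [IsProbabilityMeasure μ]

lemma integrable_fu {u : 𝕏 → A → ℝ} (hu : Measurable u) {K : ℝ} (hK : 0 ≤ K)
    (h : ∀ y b, |u y b| ≤ K * w y) (θ : List ℤ) (x : 𝕏) (a : A) :
    Integrable (fun ω => f (X θ x a ω) (u (X θ x a ω))) μ := by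
  have h0 : Measurable (0 : 𝕏 → A → ℝ) := measurable_const
  have h1 := integrable_of_eLpNorm_two_le (measurable_fu S h0 θ x a) (eLpNorm_f0 S B θ x a)
  have h2 := integrable_of_eLpNorm_two_le
    ((measurable_fu S hu θ x a).sub (measurable_fu S h0 θ x a))
    (eLpNorm_lip S B (u := u) (u' := 0) hK (by simpa using h) θ x a)
  refine (h2.add h1).congr (Filter.Eventually.of_forall fun ω => ?_)
  simp

/-- The fixed-point map is Lipschitz with constant `s` in the weighted supremum norm. -/
lemma abs_integral_sub_le {u u' : 𝕏 → A → ℝ} (hu : Measurable u) (hu' : Measurable u')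
    {K K₁ K₂ : ℝ} (hK : 0 ≤ K) (hK₁ : 0 ≤ K₁) (hK₂ : 0 ≤ K₂)
    (h₁ : ∀ y b, |u y b| ≤ K₁ * w y) (h₂ : ∀ y b, |u' y b| ≤ K₂ * w y)
    (h : ∀ y b, |u y b - u' y b| ≤ K * w y) (θ : List ℤ) (x : 𝕏) (a : A) :
    |∫ ω, f (X θ x a ω) (u (X θ x a ω)) ∂μ - ∫ ω, f (X θ x a ω) (u' (X θ x a ω)) ∂μ|
      ≤ s * K * w x := by
  rw [← integral_sub (integrable_fu S B hu hK₁ h₁ θ x a) (integrable_fu S B hu' hK₂ h₂ θ x a)]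
  exact abs_integral_le (mul_nonneg (mul_nonneg (s_nonneg B) hK) (B.w_pos x).le)
    ((measurable_fu S hu θ x a).sub (measurable_fu S hu' θ x a)) (eLpNorm_lip S B hK h θ x a)

/-- The Picard iterates from `0` form a geometric Cauchy sequence in the weighted supremum norm.
The limit satisfies `‖v‖ ≤ κ / (1 - s)` in that norm, a bound with the same constant for every
problem of a family. -/
lemma exists_fixedPoint : ∃ v : 𝕏 → A → ℝ, Measurable v ∧
    (∀ y b, |v y b| ≤ κ / (1 - s) * w y) ∧
    ∀ x a, v x a = ∫ ω, f (X [0] x a ω) (v (X [0] x a ω)) ∂μ := by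
  have hs0 := s_nonneg B
  have hs1 := B.hs1
  have hκ := B.hκ
  let T : (𝕏 → A → ℝ) → 𝕏 → A → ℝ := fun u x a => ∫ ω, f (X [0] x a ω) (u (X [0] x a ω)) ∂μ
  let U : ℕ → 𝕏 → A → ℝ := fun n => T^[n] 0
  have hU0 : U 0 = 0 := rfl
  have hUs (n : ℕ) : U (n + 1) = T (U n) := Function.iterate_succ_apply' T n 0
  have hUm (n : ℕ) : Measurable (U n) := by
    induction n with
    | zero => exact measurable_const
    | succ n ih => rw [hUs]; exact measurable_picard S ih
  have hT0 (x : 𝕏) (a : A) : |T 0 x a| ≤ κ * w x :=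
    abs_integral_le (mul_nonneg hκ (B.w_pos x).le) (measurable_fu S measurable_const [0] x a)
      (eLpNorm_f0 S B [0] x a)
  have hUb (n : ℕ) : ∃ K, 0 ≤ K ∧ ∀ y b, |U n y b| ≤ K * w y := by
    induction n with
    | zero => exact ⟨0, le_rfl, fun y b => by simp [hU0]⟩
    | succ n ih =>
      obtain ⟨K, hK, h⟩ := ih
      refine ⟨s * K + κ, by positivity, fun y b => ?_⟩
      have h1 := abs_integral_sub_le S B (hUm n) (hUm 0) hK hK le_rfl h
        (by simp [hU0]) (by simpa [hU0] using h) [0] y b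
      have h2 := hT0 y b
      rw [hUs]
      have h3 : T (U n) y b = (T (U n) y b - T 0 y b) + T 0 y b := by ring
      rw [h3, add_mul]
      exact (abs_add_le _ _).trans (add_le_add h1 h2)
  have hdiff (n : ℕ) : ∀ y b, |U n y b - U (n + 1) y b| ≤ κ * s ^ n * w y := by
    induction n with
    | zero => intro y b; simpa [hU0, hUs] using hT0 y b
    | succ n ih =>
      intro y b
      obtain ⟨K₁, hK₁, h₁⟩ := hUb n
      obtain ⟨K₂, hK₂, h₂⟩ := hUb (n + 1)
      have := abs_integral_sub_le S B (hUm n) (hUm (n + 1)) (by positivity) hK₁ hK₂ h₁ h₂ ih [0] y b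
      rw [hUs n, hUs (n + 1)]
      refine this.trans (le_of_eq ?_)
      ring
  have hd (y : 𝕏) (b : A) (n : ℕ) : dist (U n y b) (U (n + 1) y b) ≤ κ * w y * s ^ n := by
    rw [Real.dist_eq]
    refine (hdiff n y b).trans (le_of_eq ?_)
    ring
  choose v hv using fun y b => cauchySeq_tendsto_of_complete
    (cauchySeq_of_le_geometric s (κ * w y) hs1 (hd y b))
  have hvU (n : ℕ) (y : 𝕏) (b : A) : |U n y b - v y b| ≤ κ * s ^ n / (1 - s) * w y := by
    have := dist_le_of_le_geometric_of_tendsto s (κ * w y) hs1 (hd y b) (hv y b) n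
    rw [Real.dist_eq] at this
    refine this.trans (le_of_eq ?_)
    ring
  have h1s : 0 < 1 - s := by linarith
  have hvm : Measurable v := by
    refine measurable_pi_iff.2 fun b => ?_
    exact measurable_of_tendsto_metrizable (fun n => (measurable_pi_apply b).comp (hUm n))
      (tendsto_pi_nhds.2 fun y => hv y b)
  have hvb (y : 𝕏) (b : A) : |v y b| ≤ κ / (1 - s) * w y := by simpa [hU0] using hvU 0 y b
  refine ⟨v, hvm, hvb, fun x a => ?_⟩
  refine tendsto_nhds_unique ((Filter.tendsto_add_atTop_iff_nat 1).2 (hv x a)) ?_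
  rw [tendsto_iff_dist_tendsto_zero]
  have hlim : Filter.Tendsto (fun n : ℕ => s * (κ * s ^ n / (1 - s)) * w x) Filter.atTop (nhds 0) := by
    have h := (tendsto_pow_atTop_nhds_zero_of_lt_one hs0 hs1).const_mul (s * κ / (1 - s) * w x)
    rw [mul_zero] at h
    refine h.congr fun n => ?_
    ring
  refine squeeze_zero (fun _ => dist_nonneg) (fun n => ?_) hlim
  obtain ⟨K₁, hK₁, h₁⟩ := hUb n
  rw [hUs, Real.dist_eq]
  exact abs_integral_sub_le S B (hUm n) hvm (by positivity) hK₁ (by positivity) h₁ hvb (hvU n) [0] x a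

lemma fixedPoint_unique {u v : 𝕏 → A → ℝ} (hu : Measurable u) (hv : Measurable v) {K K' : ℝ}
    (hK : 0 ≤ K) (hK' : 0 ≤ K') (hub : ∀ y b, |u y b| ≤ K * w y) (hvb : ∀ y b, |v y b| ≤ K' * w y)
    (hue : ∀ x a, u x a = ∫ ω, f (X [0] x a ω) (u (X [0] x a ω)) ∂μ)
    (hve : ∀ x a, v x a = ∫ ω, f (X [0] x a ω) (v (X [0] x a ω)) ∂μ) : u = v := by
  have hs0 := s_nonneg B
  have key (n : ℕ) : ∀ y b, |u y b - v y b| ≤ (K + K') * s ^ n * w y := by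
    induction n with
    | zero =>
      intro y b
      rw [pow_zero, mul_one, add_mul]
      exact (abs_sub _ _).trans (add_le_add (hub y b) (hvb y b))
    | succ n ih =>
      intro y b
      have := abs_integral_sub_le S B hu hv (by positivity) hK hK' hub hvb ih [0] y b
      rw [← hue, ← hve] at this
      refine this.trans (le_of_eq ?_)
      ring
  ext x a
  have h := ((tendsto_pow_atTop_nhds_zero_of_lt_one hs0 B.hs1).const_mul (K + K')).mul_const (w x)
  rw [mul_zero, zero_mul] at h
  have := ge_of_tendsto' h fun n => key n x a
  exact sub_eq_zero.1 (abs_nonpos_iff.1 this)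

omit [IsProbabilityMeasure μ] [Nonempty A] B in
lemma measurable_fV {α β : List ℤ} (n : ℕ) (x : 𝕏) (a : A) :
    Measurable fun ω => f (X α x a ω) (fun b => V n β (X α x a ω) b ω) :=
  measurable_freeze (S.sub α) (S.sig_le (desc β)) (S.measX_pt α x a)
    (Z := fun p => f p.1 (fun b => V n β p.1 b p.2))
    (measurable_f_comp S.measf measurable_fst fun b => S.measV n β b)

/-! ### Bias and fluctuation of the approximations -/

section Dev

variable {v : 𝕏 → A → ℝ} (hvm : Measurable v)
include hvm

omit [IsProbabilityMeasure μ] [Nonempty A] B in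
lemma measurable_dev (n : ℕ) (α β : List ℤ) (x : 𝕏) (a : A) :
    Measurable fun ω => f (X α x a ω) (fun b => V n β (X α x a ω) b ω)
      - f (X α x a ω) (v (X α x a ω)) :=
  (measurable_fV S n x a).sub (measurable_fu S hvm α x a)

omit [Nonempty A] B in
/-- The mean of `f(X^α, V_n^β(X^α)) - f(X^α, v(X^α))` does not depend on the indices, as long as
`X^α` is independent of `V_n^β`. This is what makes the telescoping of the means exact. -/
lemma integral_dev_congr (n : ℕ) {α β α' β' : List ℤ} (h : α ∉ desc β) (h' : α' ∉ desc β')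
    (x : 𝕏) (a : A) :
    ∫ ω, (f (X α x a ω) (fun b => V n β (X α x a ω) b ω) - f (X α x a ω) (v (X α x a ω))) ∂μ
      = ∫ ω, (f (X α' x a ω) (fun b => V n β' (X α' x a ω) b ω)
          - f (X α' x a ω) (v (X α' x a ω))) ∂μ := by
  have hZ (β : List ℤ) : Measurable[m𝕏.prod (sig F (desc β))] fun p : 𝕏 × Ω =>
      f p.1 (fun b => V n β p.1 b p.2) - f p.1 (v p.1) :=
    (measurable_f_comp S.measf measurable_fst fun b => S.measV n β b).sub
      (measurable_f_comp S.measf measurable_fst fun b =>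
        (measurable_pi_apply b).comp (hvm.comp measurable_fst))
  have hy (y : 𝕏) : μ.map (fun ω => f y (fun b => V n β y b ω) - f y (v y))
      = μ.map (fun ω => f y (fun b => V n β' y b ω) - f y (v y)) := by
    have hΦ : Measurable fun g : A → ℝ => f y g - f y (v y) :=
      (S.measf.comp (measurable_const.prodMk measurable_id)).sub measurable_const
    have e (β : List ℤ) : μ.map (fun ω => f y (fun b => V n β y b ω) - f y (v y))
        = (μ.map (fun ω => fun b => V n β y b ω)).map (fun g : A → ℝ => f y g - f y (v y)) := by
      rw [Measure.map_map hΦ (measurable_pi_iff.2 fun b =>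
        (S.measV_pt n β y b).mono (S.sig_le _) le_rfl)]
      rfl
    rw [e, e, S.lawV_pt n β β']
  have hlaw := map_freeze_congr (S.sub α) (S.sig_le _) (S.indep_F_sig h) (S.sub α')
    (S.sig_le _) (S.indep_F_sig h') (S.measX_pt α x a) (S.measX_pt α' x a) (hZ β) (hZ β')
    (S.law_X_pt α α' x a) hy
  have e (α β : List ℤ) := integral_map (μ := μ) (f := fun r : ℝ => r)
    (measurable_dev S hvm n α β x a).aemeasurable measurable_id.aestronglyMeasurable
  rw [← e, ← e]
  exact congrArg (fun ν => ∫ r : ℝ, r ∂ν) hlaw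

variable [Fintype A]

omit [IsProbabilityMeasure μ] [Nonempty A] B in
lemma measurable_err (n : ℕ) (β : List ℤ) :
    Measurable[m𝕏.prod (sig F (desc β))] fun p : 𝕏 × Ω => ⨆ b, |v p.1 b - V n β p.1 b p.2| := by
  refine Measurable.iSup fun b => ?_
  exact measurable_norm.comp (Measurable.sub
    ((measurable_pi_apply b).comp (hvm.comp measurable_fst)) (S.measV n β b))

omit [Nonempty A] in
/-- An error `e` of the approximation becomes an error `s * e` after one application of the
fixed-point map, evaluated at a random point independent of the approximation. -/
lemma eLpNorm_dev {n : ℕ} {α β : List ℤ} (h : α ∉ desc β) {e : ℝ} (he : 0 ≤ e)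
    (hE : ∀ y, eLpNorm (fun ω => ⨆ b, |v y b - V n β y b ω|) 2 μ ≤ ENNReal.ofReal (e * w y))
    (x : 𝕏) (a : A) :
    eLpNorm (fun ω => f (X α x a ω) (fun b => V n β (X α x a ω) b ω)
      - f (X α x a ω) (v (X α x a ω))) 2 μ ≤ ENNReal.ofReal (s * e * w x) := by
  have hlw : 0 ≤ lam * w x := mul_nonneg B.hlam (B.w_pos x).le
  have h1 : eLpNorm (fun ω => ⨆ b, |v (X α x a ω) b - V n β (X α x a ω) b ω|) 2 μ
      ≤ ENNReal.ofReal (e * (lam * w x)) := by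
    rw [eLpNorm_two_le_iff (mul_nonneg he hlw)]
    rw [lintegral_freeze (S.sub α) (S.sig_le _) (S.indep_F_sig h) (S.measX_pt α x a)
      (h := fun p : 𝕏 × Ω => ENNReal.ofReal ((⨆ b, |v p.1 b - V n β p.1 b p.2|) ^ 2))
      (((measurable_err S hvm n β).pow_const 2).ennreal_ofReal)]
    have h2 (y : 𝕏) := (eLpNorm_two_le_iff (mul_nonneg he (B.w_pos y).le)).1 (hE y)
    refine (lintegral_mono h2).trans ?_
    have hm : Measurable fun y => ENNReal.ofReal (w y ^ 2) := (B.measw.pow_const 2).ennreal_ofReal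
    simp_rw [mul_pow e, ENNReal.ofReal_mul (sq_nonneg e)]
    rw [lintegral_const_mul _ hm, lintegral_map hm (measX_amb S α x a)]
    gcongr
    exact (eLpNorm_two_le_iff hlw).1 (eLpNorm_w S B α x a)
  refine (eLpNorm_le_of_abs_le B.hL h1 fun ω => ?_).trans (ENNReal.ofReal_le_ofReal ?_)
  · rw [abs_sub_comm]
    exact B.lip _ _ _
  · have := B.hs
    have := B.w_pos x
    calc L * (e * (lam * w x)) = (lam * L) * (e * w x) := by ring
      _ ≤ s * (e * w x) := by gcongr
      _ = _ := by ring

variable (hvb : ∀ y b, |v y b| ≤ κ / (1 - s) * w y)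
  (hve : ∀ x a, v x a = ∫ ω, f (X [0] x a ω) (v (X [0] x a ω)) ∂μ)

omit [IsProbabilityMeasure μ] [Nonempty A] B [Fintype A] in
include hve in
lemma integral_fv (α : List ℤ) (x : 𝕏) (a : A) :
    ∫ ω, f (X α x a ω) (v (X α x a ω)) ∂μ = v x a := by
  have hm : Measurable fun y => f y (v y) := S.measf.comp (measurable_id.prodMk hvm)
  rw [hve, ← integral_map (φ := X α x a) (f := fun y => f y (v y))
    (measX_amb S α x a).aemeasurable hm.aestronglyMeasurable, S.law_X_pt α [0],
    integral_map (measX_amb S [0] x a).aemeasurable hm.aestronglyMeasurable]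

/-- The mean deviation of level `n`, computed at reference indices. -/
noncomputable def meanDev (μ : Measure Ω) (X : List ℤ → 𝕏 → A → Ω → 𝕏) (f : 𝕏 → (A → ℝ) → ℝ)
    (V : ℕ → List ℤ → 𝕏 → A → Ω → ℝ) (v : 𝕏 → A → ℝ) (n : ℕ) (x : 𝕏) (a : A) : ℝ :=
  ∫ ω, (f (X [0] x a ω) (fun b => V n [0] (X [0] x a ω) b ω) - f (X [0] x a ω) (v (X [0] x a ω))) ∂μ

/-- `L²` bound, per unit of weight, for the level-`l` samples, given bounds `e` for the errors of
the approximations. -/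
def levelBound (κ s : ℝ) (e : ℕ → ℝ) (l : ℕ) : ℝ := if l = 0 then κ else s * (e l + e (l - 1))

include hvb hve

/-- The level-`l` samples have `L²` norm at most `levelBound` and means that telescope in `l`. -/
lemma sample_bounds {n : ℕ} {e : ℕ → ℝ} (he : ∀ m, 0 ≤ e m)
    (ih : ∀ m < n, ∀ β y, eLpNorm (fun ω => ⨆ b, |v y b - V m β y b ω|) 2 μ
      ≤ ENNReal.ofReal (e m * w y)) {l : ℕ} (hl : l < n) (i : ℕ) (θ : List ℤ) (x : 𝕏) (a : A) :
    eLpNorm (fun ω => incr f V l (θ ++ [(l : ℤ), (i : ℤ) + 1]) (θ ++ [-(l : ℤ), (i : ℤ) + 1])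
          (X (θ ++ [(l : ℤ), (i : ℤ) + 1]) x a ω) ω) 2 μ
        ≤ ENNReal.ofReal (levelBound κ s e l * w x) ∧
    ∫ ω, incr f V l (θ ++ [(l : ℤ), (i : ℤ) + 1]) (θ ++ [-(l : ℤ), (i : ℤ) + 1])
          (X (θ ++ [(l : ℤ), (i : ℤ) + 1]) x a ω) ω ∂μ
        = meanDev μ X f V v l x a - if l = 0 then - v x a else meanDev μ X f V v (l - 1) x a := by
  have hs0 := s_nonneg B
  have hw := B.w_pos x
  have h0 : ([0] : List ℤ) ∉ desc [0] := notMem_desc_of_length le_rfl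
  set α := θ ++ [(l : ℤ), (i : ℤ) + 1] with hα
  set α' := θ ++ [-(l : ℤ), (i : ℤ) + 1] with hα'
  have h1 : α ∉ desc α := notMem_desc_of_length le_rfl
  have h2 : α ∉ desc α' := notMem_desc_of_length (by simp [hα, hα'])
  have hm1 := measurable_dev S hvm l α α x a
  have hb1 := eLpNorm_dev S B hvm h1 (he l) (ih l hl α) x a
  have hi1 := integrable_of_eLpNorm_two_le hm1 hb1
  rcases eq_or_ne l 0 with rfl | hl0
  · have e0 : (fun ω => incr f V 0 α α' (X α x a ω) ω) = fun ω => f (X α x a ω) 0 := by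
      ext ω
      simp only [incr, S.V_zero, if_true, sub_zero]
      rfl
    have e1 (ω : Ω) : incr f V 0 α α' (X α x a ω) ω
        = (f (X α x a ω) (fun b => V 0 α (X α x a ω) b ω) - f (X α x a ω) (v (X α x a ω)))
          + f (X α x a ω) (v (X α x a ω)) := by simp [incr]
    constructor
    · rw [e0]
      exact eLpNorm_f0 S B α x a
    · simp_rw [e1]
      have h1s : 0 < 1 - s := by linarith [B.hs1]
      rw [integral_add hi1 (integrable_fu S B hvm (div_nonneg B.hκ h1s.le) hvb α x a),
        integral_fv S hvm hve, integral_dev_congr S hvm 0 h1 h0]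
      simp [meanDev]
  · have hm2 := measurable_dev S hvm (l - 1) α α' x a
    have hb2 := eLpNorm_dev S B hvm h2 (he (l - 1)) (ih (l - 1) (by omega) α') x a
    have hi2 := integrable_of_eLpNorm_two_le hm2 hb2
    have e1 (ω : Ω) : incr f V l α α' (X α x a ω) ω
        = (f (X α x a ω) (fun b => V l α (X α x a ω) b ω) - f (X α x a ω) (v (X α x a ω)))
          - (f (X α x a ω) (fun b => V (l - 1) α' (X α x a ω) b ω)
            - f (X α x a ω) (v (X α x a ω))) := by simp [incr, hl0]
    simp_rw [e1]
    constructor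
    · have hel := he l
      have hel' := he (l - 1)
      refine (eLpNorm_mono_real fun ω => ?_).trans ((eLpNorm_add_abs_le (by positivity)
        (by positivity) hm1 hm2 hb1 hb2).trans (le_of_eq ?_))
      · exact abs_sub _ _
      · simp only [levelBound, hl0, if_false]
        congr 1
        ring
    · rw [integral_sub hi1 hi2, integral_dev_congr S hvm l h1 h0,
        integral_dev_congr S hvm (l - 1) h2 h0]
      simp [meanDev, hl0]

/-- One step of the error analysis: the bias contributes `s * e (n - 1)` and the Monte Carlo
fluctuation of level `l` contributes at most `|A| / √(M ^ (n - l))` times its `L²` size. -/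
lemma error_step (hM : 0 < M) {n : ℕ} (hn : n ≠ 0) {e : ℕ → ℝ} (he : ∀ m, 0 ≤ e m)
    (ih : ∀ m < n, ∀ β y, eLpNorm (fun ω => ⨆ b, |v y b - V m β y b ω|) 2 μ
      ≤ ENNReal.ofReal (e m * w y)) (θ : List ℤ) (x : 𝕏) :
    eLpNorm (fun ω => ⨆ b, |v x b - V n θ x b ω|) 2 μ
      ≤ ENNReal.ofReal ((s * e (n - 1) + ∑ l ∈ Finset.range n,
          Fintype.card A * (levelBound κ s e l / √((M : ℝ) ^ (n - l)))) * w x) := by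
  have hs0 := s_nonneg B
  have hw := B.w_pos x
  have hκ := B.hκ
  have hlb (l : ℕ) : 0 ≤ levelBound κ s e l := by
    unfold levelBound
    have := he l
    have := he (l - 1)
    split_ifs <;> positivity
  let m (l : ℕ) (a : A) : ℝ :=
    meanDev μ X f V v l x a - if l = 0 then - v x a else meanDev μ X f V v (l - 1) x a
  let I (l i : ℕ) (a : A) (ω : Ω) : ℝ := incr f V l (θ ++ [(l : ℤ), (i : ℤ) + 1])
    (θ ++ [-(l : ℤ), (i : ℤ) + 1]) (X (θ ++ [(l : ℤ), (i : ℤ) + 1]) x a ω) ω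
  -- the centred Monte Carlo average of level `l`
  let Z (l : ℕ) (a : A) (ω : Ω) : ℝ :=
    ((M : ℝ) ^ (n - l))⁻¹ * ∑ i ∈ Finset.range (M ^ (n - l)), I l i a ω - m l a
  have hIm (l i : ℕ) (a : A) : Measurable (I l i a) :=
    (S.measurable_sample θ l i x a).mono (S.sig_le _) le_rfl
  have hZm (l : ℕ) (a : A) : Measurable (Z l a) :=
    (Measurable.const_mul (Finset.measurable_sum _ fun i _ => hIm l i a) _).sub measurable_const
  have hZb (l : ℕ) (hl : l < n) (a : A) : eLpNorm (Z l a) 2 μ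
      ≤ ENNReal.ofReal (levelBound κ s e l * w x / √((M : ℝ) ^ (n - l))) := by
    have hb (i : ℕ) := sample_bounds S B hvm hvb hve he ih hl i θ x a
    have := eLpNorm_average_le (μ := μ) (N := M ^ (n - l)) (Z := fun i => I l i a) (m := m l a)
      (pow_pos hM _) (mul_nonneg (hlb l) hw.le) (fun i _ => hIm l i a) (fun i _ => (hb i).1)
      (fun i _ => (hb i).2) (fun i _ j _ hij => (IndepFun_iff_Indep _ _ μ).2 <|
        indep_of_indep_of_le_left (indep_of_indep_of_le_right
          (S.indep_sig (branch_disjoint θ (l := l) (l' := l) (i := i) (i' := j) (by simpa using hij)))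
          (S.measurable_sample θ l j x a).comap_le) (S.measurable_sample θ l i x a).comap_le)
    push_cast at this
    exact this
  -- telescoping of the means over the levels
  have hmean (a : A) : ∑ l ∈ Finset.range n, m l a = meanDev μ X f V v (n - 1) x a + v x a := by
    obtain ⟨k, rfl⟩ := Nat.exists_eq_succ_of_ne_zero hn
    clear hn ih hZb hZm Z
    induction k with
    | zero => simp [m]
    | succ k ihk => rw [Finset.sum_range_succ, ihk]; simp [m]; ring
  have hbias (a : A) : |meanDev μ X f V v (n - 1) x a| ≤ s * e (n - 1) * w x :=
    abs_integral_le (mul_nonneg (mul_nonneg hs0 (he _)) hw.le)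
      (measurable_dev S hvm (n - 1) [0] [0] x a)
      (eLpNorm_dev S B hvm (notMem_desc_of_length le_rfl) (he _) (ih (n - 1) (by omega) [0]) x a)
  have hsplit (ω : Ω) (a : A) :
      v x a - V n θ x a ω = - meanDev μ X f V v (n - 1) x a - ∑ l ∈ Finset.range n, Z l a ω := by
    rw [S.V_eq]
    simp only [Z, Finset.sum_sub_distrib, hmean]
    simp only [I]
    ring
  let P : Finset (ℕ × A) := Finset.range n ×ˢ Finset.univ
  have hpt (ω : Ω) : ‖⨆ b, |v x b - V n θ x b ω|‖
      ≤ |s * e (n - 1) * w x| + |(∑ p ∈ P, |Z p.1 p.2 ω|)| := by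
    rw [Real.norm_of_nonneg (Real.iSup_nonneg fun b => abs_nonneg _)]
    refine ciSup_le fun a => ?_
    rw [hsplit]
    refine (abs_sub _ _).trans (add_le_add ?_ ?_)
    · rw [abs_neg]
      exact (hbias a).trans (le_abs_self _)
    · refine (Finset.abs_sum_le_sum_abs _ _).trans (le_trans ?_ (le_abs_self _))
      rw [Finset.sum_product]
      exact Finset.sum_le_sum fun l _ =>
        Finset.single_le_sum (f := fun b => |Z l b ω|) (fun _ _ => abs_nonneg _) (Finset.mem_univ a)
  have hsum := eLpNorm_sum_abs_le (μ := μ) P (g := fun p => Z p.1 p.2)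
    (c := fun p => levelBound κ s e p.1 * w x / √((M : ℝ) ^ (n - p.1)))
    (fun p _ => by have := hlb p.1; positivity) (fun p _ => hZm _ _)
    (fun p hp => hZb p.1 (Finset.mem_range.1 (Finset.mem_product.1 hp).1) p.2)
  have hconst : eLpNorm (fun _ : Ω => s * e (n - 1) * w x) 2 μ
      ≤ ENNReal.ofReal (s * e (n - 1) * w x) := by
    have := he (n - 1)
    rw [eLpNorm_const _ (by norm_num) (NeZero.ne μ), Real.enorm_of_nonneg (by positivity)]
    simp
  have := he (n - 1)
  refine (eLpNorm_mono_real hpt).trans ((eLpNorm_add_abs_le (by positivity) ?_ measurable_const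
    ?_ hconst hsum).trans (le_of_eq ?_))
  · exact Finset.sum_nonneg fun p _ => by have := hlb p.1; positivity
  · exact Finset.measurable_sum _ fun p _ => (hZm p.1 p.2).norm
  · congr 1
    rw [Finset.sum_product, add_mul, Finset.sum_mul]
    congr 1
    refine Finset.sum_congr rfl fun l _ => ?_
    simp only [Finset.sum_const, Finset.card_univ, nsmul_eq_mul]
    ring

/-- Any sequence which dominates the error recursion bounds the root mean square error of the
approximations, relative to the weight. -/
lemma error_bound (hM : 0 < M) {e : ℕ → ℝ} (he : ∀ m, 0 ≤ e m) (he0 : κ / (1 - s) ≤ e 0)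
    (hrec : ∀ n, n ≠ 0 → s * e (n - 1) + ∑ l ∈ Finset.range n,
      Fintype.card A * (levelBound κ s e l / √((M : ℝ) ^ (n - l))) ≤ e n) (n : ℕ) :
    ∀ θ x, eLpNorm (fun ω => ⨆ b, |v x b - V n θ x b ω|) 2 μ ≤ ENNReal.ofReal (e n * w x) := by
  induction n using Nat.strong_induction_on with
  | _ n ih =>
    intro θ x
    have hw := B.w_pos x
    rcases eq_or_ne n 0 with rfl | hn
    · simp only [S.V_zero, sub_zero]
      rw [eLpNorm_const _ (by norm_num) (NeZero.ne μ),
        Real.enorm_of_nonneg (Real.iSup_nonneg fun b => abs_nonneg _)]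
      simp only [measure_univ, ENNReal.one_rpow, mul_one]
      refine ENNReal.ofReal_le_ofReal (ciSup_le fun b => (hvb x b).trans ?_)
      gcongr
    · refine (error_step S B hvm hvb hve hM hn he ih θ x).trans (ENNReal.ofReal_le_ofReal ?_)
      gcongr
      exact hrec n hn

end Dev

end Bounds

end Error

/-! ### Costs, rates and the choice of the number of levels -/

section Numerics

/-- The recursion for the costs is dominated by the geometric sequence `R * (4 * M) ^ n`. -/
lemma cost_bound {M : ℕ} (hM : 0 < M) {R : ℝ} (hR : 0 ≤ R) {c : ℕ → ℝ}
    (hc : ∀ n, c n ≤ ∑ l ∈ Finset.range n, (M : ℝ) ^ (n - l) *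
      (R + c l + if l = 0 then 0 else c (l - 1))) (n : ℕ) : c n ≤ R * (4 * M) ^ n := by
  have hM1 : (1 : ℝ) ≤ M := by exact_mod_cast hM
  induction n using Nat.strong_induction_on with
  | _ n ih =>
    have key : ∀ l ∈ Finset.range n, (M : ℝ) ^ (n - l) *
        (R + c l + if l = 0 then 0 else c (l - 1)) ≤ (R * (M : ℝ) ^ n) * (3 * 4 ^ l) := by
      intro l hl
      have hln := Finset.mem_range.1 hl
      have h1 : (1 : ℝ) ≤ (4 * M) ^ l := one_le_pow₀ (by linarith)
      have h2 := ih l hln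
      have h3 : (if l = 0 then 0 else c (l - 1)) ≤ R * (4 * M) ^ l := by
        split_ifs with h
        · positivity
        · refine (ih (l - 1) (by omega)).trans ?_
          gcongr
          · linarith
          · omega
      have h4 : R ≤ R * (4 * (M : ℝ)) ^ l := le_mul_of_one_le_right hR h1
      calc _ ≤ (M : ℝ) ^ (n - l) * (3 * (R * (4 * M) ^ l)) := by
            gcongr
            linarith
        _ = R * ((M : ℝ) ^ (n - l) * M ^ l) * (3 * 4 ^ l) := by rw [mul_pow]; ring
        _ = _ := by rw [← pow_add, Nat.sub_add_cancel hln.le]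
    refine (hc n).trans ((Finset.sum_le_sum key).trans ?_)
    have hg : ∑ l ∈ Finset.range n, (3 : ℝ) * 4 ^ l = 4 ^ n - 1 := by
      have := geom_sum_eq (x := (4 : ℝ)) (by norm_num) n
      rw [← Finset.mul_sum, this]
      ring
    rw [← Finset.mul_sum, hg, mul_pow]
    have : 0 ≤ R * (M : ℝ) ^ n := by positivity
    nlinarith

/-- The condition on `M`, with `q = 1 / √M` and `β = |A|`, leaves room for a rate `ρ < 1` with
which the error recursion contracts.
At `ρ = 1` the left-hand side is `s + 2 β s q / (1 - q)`, which is smaller than `1` exactly if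
`1 / q > (1 + s (2 β - 1)) / (1 - s)`. -/
lemma exists_rate {s β q : ℝ} (hq1 : q < 1)
    (h : q * (1 + s * (2 * β - 1)) < 1 - s) :
    ∃ ρ, q < ρ ∧ ρ < 1 ∧ s / ρ + β * (s * (1 + 1 / ρ)) * (q / (ρ - q)) < 1 := by
  have hq : 0 < 1 - q := by linarith
  have hc : ContinuousAt (fun ρ : ℝ => s / ρ + β * (s * (1 + 1 / ρ)) * (q / (ρ - q))) 1 := by
    have : (1 : ℝ) - q ≠ 0 := hq.ne'
    fun_prop (disch := first | exact one_ne_zero | assumption)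
  have h1 : s / 1 + β * (s * (1 + 1 / 1)) * (q / (1 - q)) < 1 := by
    have : s / 1 + β * (s * (1 + 1 / 1)) * (q / (1 - q)) = s + 2 * β * s * q / (1 - q) := by ring
    rw [this, ← lt_sub_iff_add_lt', div_lt_iff₀ hq]
    nlinarith
  have hev := hc.eventually_lt (continuousAt_const (y := (1 : ℝ))) h1
  have hev2 : ∀ᶠ ρ in nhds (1 : ℝ), q < ρ := lt_mem_nhds hq1
  have := ((hev.and hev2).filter_mono nhdsWithin_le_nhds).and
    (self_mem_nhdsWithin : Set.Iio (1 : ℝ) ∈ nhdsWithin 1 (Set.Iio 1))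
  obtain ⟨ρ, ⟨h2, h3⟩, h4⟩ := this.exists
  exact ⟨ρ, h3, h4, h2⟩

/-- A geometric sequence with the rate from `exists_rate` dominates the error recursion. -/
lemma exists_majorant {M : ℕ} {κ s β : ℝ} (hκ : 0 ≤ κ) (hs0 : 0 ≤ s) (hs1 : s < 1) (hβ : 1 ≤ β)
    (hM : (1 + s * (2 * β - 1)) ^ 2 / (1 - s) ^ 2 < (M : ℝ)) :
    0 < M ∧ ∃ K ρ : ℝ, 1 ≤ K ∧ 0 < ρ ∧ ρ < 1 ∧ κ / (1 - s) ≤ K ∧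
      ∀ n, n ≠ 0 → s * (K * ρ ^ (n - 1)) + ∑ l ∈ Finset.range n,
        β * ((Bounds.levelBound κ s (fun m => K * ρ ^ m) l) / √((M : ℝ) ^ (n - l))) ≤ K * ρ ^ n := by
  have h1s : 0 < 1 - s := by linarith
  have hnum : 1 ≤ 1 + s * (2 * β - 1) := by nlinarith
  have hM1 : (1 : ℝ) < M := by
    refine lt_of_le_of_lt ?_ hM
    rw [one_le_div (by positivity)]
    gcongr
    linarith
  have hsq : 1 < √(M : ℝ) := by rwa [Real.lt_sqrt (by norm_num), one_pow]
  set q := (√(M : ℝ))⁻¹ with hqdef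
  have hq0 : 0 < q := by positivity
  have hq1 : q < 1 := inv_lt_one_of_one_lt₀ hsq
  have hqs : q * (1 + s * (2 * β - 1)) < 1 - s := by
    have h : (1 + s * (2 * β - 1)) / (1 - s) < √(M : ℝ) := by
      rw [Real.lt_sqrt (by positivity), div_pow]
      exact hM
    rw [div_lt_iff₀ h1s] at h
    rw [hqdef, inv_mul_lt_iff₀ (by positivity)]
    exact h
  obtain ⟨ρ, hqρ, hρ1, hφ⟩ := exists_rate hq1 hqs
  have hρ0 : 0 < ρ := hq0.trans hqρ
  have hρq : 0 < ρ - q := by linarith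
  set φ := s / ρ + β * (s * (1 + 1 / ρ)) * (q / (ρ - q)) with hφdef
  have h1φ : 0 < 1 - φ := by linarith
  -- `K` is large enough for the start of the recursion and for absorbing the level-`0` samples
  let K := max 1 (max (κ / (1 - s)) (β * κ / (1 - φ)))
  have hK1 : 1 ≤ K := le_max_left _ _
  have hK2 : κ / (1 - s) ≤ K := (le_max_left _ _).trans (le_max_right _ _)
  have hK3 : β * κ / (1 - φ) ≤ K := (le_max_right _ _).trans (le_max_right _ _)
  refine ⟨by exact_mod_cast (zero_lt_one.trans hM1), K, ρ, hK1, hρ0, hρ1, hK2, fun n hn => ?_⟩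
  set b := Bounds.levelBound κ s (fun m => K * ρ ^ m) with hb
  set H := s * K * (1 + 1 / ρ) with hH
  have hH0 : 0 ≤ H := by positivity
  have hb' (l : ℕ) (hl : l ≠ 0) : b l = H * ρ ^ l := by
    obtain ⟨k, rfl⟩ := Nat.exists_eq_succ_of_ne_zero hl
    simp only [hb, Bounds.levelBound, Nat.succ_ne_zero, if_false, Nat.succ_sub_one, hH, pow_succ]
    field_simp
  have hb0 : b 0 = κ := by simp [hb, Bounds.levelBound]
  have hS (n : ℕ) : ∑ l ∈ Finset.range n, q ^ (n - l) * b l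
      ≤ κ * q ^ n + H * (q / (ρ - q)) * ρ ^ n := by
    induction n with
    | zero => simp; positivity
    | succ n ih =>
      have e : ∑ l ∈ Finset.range n, q ^ (n + 1 - l) * b l
          = q * ∑ l ∈ Finset.range n, q ^ (n - l) * b l := by
        rw [Finset.mul_sum]
        refine Finset.sum_congr rfl fun l hl => ?_
        rw [Nat.succ_sub (Finset.mem_range.1 hl).le, pow_succ]
        ring
      rw [Finset.sum_range_succ, e, Nat.add_sub_cancel_left, pow_one]
      rcases eq_or_ne n 0 with rfl | hn
      · simp only [Finset.range_zero, Finset.sum_empty, hb0]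
        have : 0 ≤ H * (q / (ρ - q)) * ρ ^ (0 + 1) := by positivity
        simp only [zero_add, pow_one] at this ⊢
        linarith
      · rw [hb' n hn]
        calc _ ≤ q * (κ * q ^ n + H * (q / (ρ - q)) * ρ ^ n) + q * (H * ρ ^ n) := by gcongr
          _ = _ := by
            field_simp
            ring
  have hsqrt (k : ℕ) (r : ℝ) : r / √((M : ℝ) ^ k) = q ^ k * r := by
    rw [hqdef, inv_pow, Real.sqrt_eq_rpow, Real.sqrt_eq_rpow, ← Real.rpow_natCast,
      ← Real.rpow_natCast, ← Real.rpow_mul (by positivity), ← Real.rpow_mul (by positivity),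
      mul_comm (k : ℝ)]
    ring
  have e1 : s * (K * ρ ^ (n - 1)) = s / ρ * K * ρ ^ n := by
    obtain ⟨k, rfl⟩ := Nat.exists_eq_succ_of_ne_zero hn
    simp only [Nat.succ_sub_one, pow_succ]
    field_simp
  simp_rw [hsqrt]
  rw [← Finset.mul_sum, e1]
  have hqn : q ^ n ≤ ρ ^ n := by gcongr
  calc _ ≤ s / ρ * K * ρ ^ n + β * (κ * q ^ n + H * (q / (ρ - q)) * ρ ^ n) := by
        gcongr
        exact hS n
    _ ≤ s / ρ * K * ρ ^ n + β * (κ * ρ ^ n + H * (q / (ρ - q)) * ρ ^ n) := by gcongr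
    _ = (φ * K + β * κ) * ρ ^ n := by rw [hφdef, hH]; ring
    _ ≤ K * ρ ^ n := by
        gcongr
        rw [div_le_iff₀ h1φ] at hK3
        linarith

/-- If the error decays like `ρ ^ n` and the cost grows like `D ^ n`, then accuracy `ε` is reached
at a cost which is polynomial in `1 / ε`. The number of levels is the smallest admissible one. -/
lemma exists_levels {K ρ D : ℝ} (hK : 1 ≤ K) (hρ0 : 0 < ρ) (hρ1 : ρ < 1) (hD : 1 ≤ D) :
    ∃ (N : ℝ → ℕ) (c : ℝ), ∀ ε : ℝ, 0 < ε → ε ≤ 1 →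
      K * ρ ^ N ε ≤ ε ∧ D ^ N ε ≤ c * ε ^ (-c) := by
  have hK0 : 0 < K := by linarith
  have hex (ε : ℝ) (hε : 0 < ε) : ∃ n : ℕ, K * ρ ^ n ≤ ε := by
    obtain ⟨n, hn⟩ := exists_pow_lt_of_lt_one (div_pos hε hK0) hρ1
    rw [lt_div_iff₀' hK0] at hn
    exact ⟨n, hn.le⟩
  have hlevel (ε : ℝ) : ∃ n : ℕ, 0 < ε → ε ≤ 1 → K * ρ ^ n ≤ ε ∧ ρ * ε / K ≤ ρ ^ n := by
    classical
    by_cases hε : 0 < ε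
    · refine ⟨Nat.find (hex ε hε), fun _ hε1 => ⟨Nat.find_spec (hex ε hε), ?_⟩⟩
      rw [div_le_iff₀ hK0]
      rcases h : Nat.find (hex ε hε) with _ | k
      · rw [pow_zero, one_mul]
        nlinarith
      · have := Nat.find_min (hex ε hε) (m := k) (by omega)
        rw [pow_succ]
        nlinarith
    · exact ⟨0, fun h => absurd h hε⟩
  choose N hN using hlevel
  -- the exponent with `D = ρ ^ (-p)`
  set p := Real.log D / -Real.log ρ with hp
  have hlog : 0 < -Real.log ρ := by have := Real.log_neg hρ0 hρ1; linarith
  have hp0 : 0 ≤ p := div_nonneg (Real.log_nonneg hD) hlog.le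
  have hDp : D = ρ ^ (-p) := by
    rw [Real.rpow_def_of_pos hρ0, hp]
    have : Real.log ρ * -(Real.log D / -Real.log ρ) = Real.log D := by
      have := hlog.ne'
      have h' : Real.log ρ ≠ 0 := by intro h0; simp [h0] at hlog
      field_simp
    rw [this, Real.exp_log (by linarith)]
  refine ⟨N, max p ((ρ / K) ^ (-p)), fun ε hε hε1 => ⟨(hN ε hε hε1).1, ?_⟩⟩
  have h2 := (hN ε hε hε1).2
  calc D ^ N ε = (ρ ^ N ε) ^ (-p) := by
        rw [hDp, ← Real.rpow_natCast, ← Real.rpow_natCast, ← Real.rpow_mul hρ0.le,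
          ← Real.rpow_mul hρ0.le, mul_comm]
    _ ≤ (ρ * ε / K) ^ (-p) :=
        Real.rpow_le_rpow_of_nonpos (by positivity) h2 (by linarith)
    _ = (ρ / K) ^ (-p) * ε ^ (-p) := by
        rw [← Real.mul_rpow (by positivity) hε.le]
        congr 1
        ring
    _ ≤ _ := by
        gcongr ?_ * ?_
        · exact le_max_right _ _
        · exact Real.rpow_le_rpow_of_exponent_ge hε hε1 (neg_le_neg (le_max_left _ _))

end Numerics

end MLFP

/-- MLFP approximations for functional fixed-point equations (Theorem 4.1, the main result of
the paper).  For a family of fixed-point problems indexed by `d ∈ 𝔇` on general measurable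
state spaces `𝕏_d` with weight functions `ω_d`, under the Lipschitz bounds `L_d`, the moment
bounds with constants `κ` and `λ_d`, the smallness condition `sup_d λ_d L_d ≤ s < 1`
(encoded by an upper bound `s`), and `M > (1 + s(2|A|−1))²/(1−s)²`:
(i) each fixed-point equation `v_d(x)(a) = E[f_d(X_d^{0,x,a}, v_d(X_d^{0,x,a}))]` has a unique
measurable solution with `sup_y ‖v_d(y)‖_∞/ω_d(y) < ∞`, and (ii) there are `N : (0,1] → ℕ`
and `c ∈ ℝ` with `𝔠_{N_ε,d} ≤ c ℜ_d ε^{−c}` and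
`sup_x (E[‖v_d(x) − V_{N_ε,d}^0(x)‖_∞²]/ω_d(x)²)^{1/2} ≤ ε` for all `d` and `ε ∈ (0,1]`.
(`Θ = ⋃_n ℤ^n` is modelled by `List ℤ`, `(θ,l,i)` by `θ ++ [l,i]`, the index `0` by `[0]`.) -/
theorem stmt15
    {𝔇 : Type*} [Nonempty 𝔇]
    {A : Type*} [Fintype A] [Nonempty A]
    {Ω : Type*} [mΩ : MeasurableSpace Ω] (μ : Measure Ω) [IsProbabilityMeasure μ]
    (M : ℕ) (κ : ℝ) (hκ : 0 ≤ κ)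
    {𝕏 : 𝔇 → Type*} [∀ d, MeasurableSpace (𝕏 d)] [∀ d, Nonempty (𝕏 d)]
    (lam L R : 𝔇 → ℝ)
    (hlam : ∀ d, 0 ≤ lam d) (hL : ∀ d, 0 ≤ L d) (hR : ∀ d, 0 ≤ R d)
    (w : ∀ d, 𝕏 d → ℝ) (hw_pos : ∀ d x, 0 < w d x) (hw_meas : ∀ d, Measurable (w d))
    (f : ∀ d, 𝕏 d → (A → ℝ) → ℝ)
    (hf : ∀ d, Measurable fun p : 𝕏 d × (A → ℝ) => f d p.1 p.2)
    (F : 𝔇 → List ℤ → MeasurableSpace Ω)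
    (hFsub : ∀ d θ, F d θ ≤ mΩ)
    (hFindep : ∀ d, ProbabilityTheory.iIndep (F d) μ)
    (X : ∀ d, List ℤ → 𝕏 d → A → Ω → 𝕏 d)
    (hXmeas : ∀ (d : 𝔇) (θ : List ℤ),
      @Measurable (𝕏 d × Ω) (A → 𝕏 d)
        ((inferInstance : MeasurableSpace (𝕏 d)).prod (F d θ)) MeasurableSpace.pi
        fun p => fun a => X d θ p.1 a p.2)
    (hXid : ∀ (d : 𝔇) (θ η : List ℤ),
      Measure.map (fun ω => fun p : 𝕏 d × A => X d θ p.1 p.2 ω) μ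
        = Measure.map (fun ω => fun p : 𝕏 d × A => X d η p.1 p.2 ω) μ)
    (hf_lip : ∀ (d : 𝔇) (x : 𝕏 d) (r s : A → ℝ),
      |f d x r - f d x s| ≤ L d * ⨆ b : A, |r b - s b|)
    (hf0_mom : ∀ (d : 𝔇) (x : 𝕏 d) (a : A),
      (∫⁻ ω, ENNReal.ofReal (|f d (X d ([0]) x a ω) 0| ^ 2) ∂μ)
        ≤ ENNReal.ofReal ((κ * w d x) ^ 2))
    (hw_mom : ∀ (d : 𝔇) (x : 𝕏 d) (a : A),
      (∫⁻ ω, ENNReal.ofReal (w d (X d ([0]) x a ω) ^ 2) ∂μ)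
        ≤ ENNReal.ofReal ((lam d * w d x) ^ 2))
    (s : ℝ) (hs : ∀ d, lam d * L d ≤ s) (hs1 : s < 1)
    (hM : (1 + s * (2 * (Fintype.card A : ℝ) - 1)) ^ 2 / (1 - s) ^ 2 < (M : ℝ))
    (V : ∀ d, ℕ → List ℤ → 𝕏 d → A → Ω → ℝ)
    (hV : ∀ (d : 𝔇) (n : ℕ) (θ : List ℤ) (x : 𝕏 d) (a : A) (ω : Ω),
      V d n θ x a ω =
        ∑ l ∈ Finset.range n, ((M : ℝ) ^ (n - l))⁻¹ *
          ∑ i ∈ Finset.range (M ^ (n - l)),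
            (f d (X d (θ ++ [(l : ℤ), (i : ℤ) + 1]) x a ω)
                (fun b => V d l (θ ++ [(l : ℤ), (i : ℤ) + 1])
                  (X d (θ ++ [(l : ℤ), (i : ℤ) + 1]) x a ω) b ω)
              - if l = 0 then 0 else
                f d (X d (θ ++ [(l : ℤ), (i : ℤ) + 1]) x a ω)
                  (fun b => V d (l - 1) (θ ++ [-(l : ℤ), (i : ℤ) + 1])
                    (X d (θ ++ [(l : ℤ), (i : ℤ) + 1]) x a ω) b ω)))
    (C : ℕ → 𝔇 → ℝ) (hC_nonneg : ∀ n d, 0 ≤ C n d)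
    (hC_rec : ∀ (n : ℕ) (d : 𝔇),
      C n d ≤ ∑ l ∈ Finset.range n, (M : ℝ) ^ (n - l) *
        (R d + C l d + if l = 0 then 0 else C (l - 1) d)) :
    ∃ v : ∀ d : 𝔇, 𝕏 d → A → ℝ,
      (∀ d : 𝔇,
        ((Measurable (v d) ∧ (∃ K : ℝ, ∀ y, (⨆ a : A, |v d y a|) ≤ K * w d y)) ∧
          ∀ (x : 𝕏 d) (a : A),
            Integrable (fun ω => f d (X d ([0]) x a ω) (v d (X d ([0]) x a ω))) μ ∧
              v d x a = ∫ ω, f d (X d ([0]) x a ω) (v d (X d ([0]) x a ω)) ∂μ) ∧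
        ∀ u : 𝕏 d → A → ℝ,
          ((Measurable u ∧ (∃ K : ℝ, ∀ y, (⨆ a : A, |u y a|) ≤ K * w d y)) ∧
            ∀ (x : 𝕏 d) (a : A),
              Integrable (fun ω => f d (X d ([0]) x a ω) (u (X d ([0]) x a ω))) μ ∧
                u x a = ∫ ω, f d (X d ([0]) x a ω) (u (X d ([0]) x a ω)) ∂μ) →
            u = v d) ∧
      ∃ (N : ℝ → ℕ) (c : ℝ), ∀ (d : 𝔇) (ε : ℝ), 0 < ε → ε ≤ 1 →
        C (N ε) d ≤ c * R d * ε ^ (-c) ∧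
          ∀ x : 𝕏 d,
            (∫⁻ ω, ENNReal.ofReal ((⨆ a : A, |v d x a - V d (N ε) ([0]) x a ω|) ^ 2) ∂μ)
              ≤ ENNReal.ofReal ((ε * w d x) ^ 2) := by
  classical
  have S (d : 𝔇) : MLFP.Scheme μ (F d) (X d) (f d) M (V d) :=
    ⟨hFsub d, hFindep d, hXmeas d, hXid d, hf d, hV d⟩
  have B (d : 𝔇) : MLFP.Bounds μ (X d) (f d) (w d) κ (lam d) (L d) s :=
    ⟨hκ, hlam d, hL d, hw_pos d, hw_meas d, hf_lip d, hf0_mom d, hw_mom d, hs d, hs1⟩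
  have hs0 : 0 ≤ s :=
    (mul_nonneg (hlam (Classical.arbitrary 𝔇)) (hL _)).trans (hs (Classical.arbitrary 𝔇))
  have h1s : 0 < 1 - s := by linarith
  have hκs : 0 ≤ κ / (1 - s) := div_nonneg hκ h1s.le
  have hcard : (1 : ℝ) ≤ Fintype.card A := by exact_mod_cast Fintype.card_pos
  choose v hvm hvb hve using fun d => MLFP.Bounds.exists_fixedPoint (S d) (B d)
  refine ⟨v, fun d => ⟨⟨⟨hvm d, κ / (1 - s), fun y => ciSup_le fun a => hvb d y a⟩, fun x a =>
    ⟨MLFP.Bounds.integrable_fu (S d) (B d) (hvm d) hκs (hvb d) [0] x a, hve d x a⟩⟩, ?_⟩, ?_⟩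
  · rintro u ⟨⟨hum, K, hK⟩, hu⟩
    refine MLFP.Bounds.fixedPoint_unique (S d) (B d) hum (hvm d) (abs_nonneg K) hκs
      (fun y b => ?_) (hvb d) (fun x a => (hu x a).2) (hve d)
    have := hw_pos d y
    exact (MLFP.abs_le_iSup (u y) b).trans ((hK y).trans (by gcongr; exact le_abs_self K))
  · obtain ⟨hM0, K, ρ, hK1, hρ0, hρ1, hK, hrec⟩ := MLFP.exists_majorant hκ hs0 hs1 hcard hM
    have hMr : (1 : ℝ) ≤ M := by exact_mod_cast hM0
    have hK0 : 0 ≤ K := by linarith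
    obtain ⟨N, c, hNc⟩ := MLFP.exists_levels hK1 hρ0 hρ1 (D := 4 * M) (by linarith)
    refine ⟨N, c, fun d ε hε hε1 => ⟨?_, fun x => ?_⟩⟩
    · calc C (N ε) d ≤ R d * (4 * M) ^ N ε :=
            MLFP.cost_bound hM0 (hR d) (c := fun n => C n d) (fun n => hC_rec n d) (N ε)
        _ ≤ R d * (c * ε ^ (-c)) := by
            have := hR d
            gcongr
            exact (hNc ε hε hε1).2
        _ = _ := by ring
    · have hw := hw_pos d x
      refine (MLFP.eLpNorm_two_le_iff (mul_nonneg hε.le hw.le)).1 ?_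
      refine (MLFP.Bounds.error_bound (S d) (B d) (hvm d) (hvb d) (hve d) hM0
        (e := fun n => K * ρ ^ n) (fun n => by positivity) (by simpa using hK) hrec
        (N ε) [0] x).trans (ENNReal.ofReal_le_ofReal ?_)
      gcongr
      exact (hNc ε hε hε1).1
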